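/- arXiv:2411.03158 — 6 statements merged into one kernel-verified Lean document; each statement's English description precedes it below -/
import Mathlib

section
/- Let H ⊆ V be a k-dimensional subspace, and set r = k − dim(H ∩ H^⊥). Then there exist subspaces M₁, M₂, M₃, M₄ ⊆ V such that V = M₁ ⊕ M₂ ⊕ M₃ ⊕ M₄ (internal direct sum), dim M₁ = k − r, dim M₂ = r, dim M₃ = n − 2k + r, dim M₄ = k − r, H ∩ H^⊥ = M₁, H = M₁ ⊕ M₂, H^⊥ = M₁ ⊕ M₃, and moreover the restriction of ⟨−,−⟩ to M₂ is nondegenerate, the restriction of ⟨−,−⟩ to M₃ is nondegenerate, the pairing M₁ × M₄ → ℂ given by ⟨−,−⟩ is perfect (nondegenerate in each variable), and ⟨Mᵢ, Mⱼ⟩ = 0 for every pair (i,j) other than (1,4), (4,1), (2,2), (3,3). -/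
/-!
Put `R = H ∩ H^⊥` and choose complements `M₁` of `R` in `H` and `M₂` of `R` in `H^⊥`
(indices `0, …, 3` as in the statement, so `R = M₀`). Since `H^⊥⊥ = H`, the form is nondegenerate
on each of the mutually orthogonal spaces `M₁` and `M₂`, so `V = D ⊕ W` with `D = M₁ ⊕ M₂` and
`W = D^⊥`. The form is nondegenerate on `W`, and `R ⊆ W` is isotropic with `dim W = 2 dim R`.
It remains to find an isotropic complement `M₃` of `R` in `W` (`exists_isotropic_compl`): take any
complement `C`; the pairing `R × C` is perfect, so there is a linear `f : C → R` with
`⟨f c, c'⟩ = -⟨c, c'⟩ / 2`, and the graph `{c + f c}` is isotropic because the form is symmetric or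
skew-symmetric.
-/

open Module

/-- Left orthogonal complement `H^⊥ = {v | ⟨v,w⟩ = 0 for all w ∈ H}` of a subspace with
respect to a bilinear form. -/
def bperp {V : Type*} [AddCommGroup V] [Module ℂ V]
    (B : V →ₗ[ℂ] V →ₗ[ℂ] ℂ) (H : Submodule ℂ V) : Submodule ℂ V where
  carrier := {v | ∀ w ∈ H, B v w = 0}
  add_mem' := by
    intro a b ha hb w hw
    rw [map_add, LinearMap.add_apply, ha w hw, hb w hw, add_zero]
  zero_mem' := by
    intro w hw
    simp
  smul_mem' := by
    intro c a ha w hw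
    rw [map_smul, LinearMap.smul_apply, ha w hw, smul_zero]

lemma exists_compl_in {V : Type*} [AddCommGroup V] [Module ℂ V] (R W : Submodule ℂ V)
    (h : R ≤ W) : ∃ C : Submodule ℂ V, Disjoint R C ∧ R ⊔ C = W := by
  obtain ⟨C, hC⟩ := Submodule.exists_isCompl R
  refine ⟨C ⊓ W, hC.disjoint.mono_right inf_le_left, ?_⟩
  rw [← sup_inf_assoc_of_le C h, hC.sup_eq_top, top_inf_eq]

/-- An isotropic subspace of half the dimension in a nondegenerate subspace `W` has an isotropic
complement in `W`. -/
lemma exists_isotropic_compl {V : Type*} [AddCommGroup V] [Module ℂ V] [FiniteDimensional ℂ V]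
    (B : V →ₗ[ℂ] V →ₗ[ℂ] ℂ)
    (hrefl : (∀ v w, B v w = B w v) ∨ (∀ v w, B v w = - B w v))
    (R W : Submodule ℂ V) (hRW : R ≤ W) (hR : ∀ v ∈ R, ∀ w ∈ R, B v w = 0)
    (hW : ∀ v ∈ W, (∀ w ∈ W, B v w = 0) → v = 0)
    (hdim : finrank ℂ W = 2 * finrank ℂ R) :
    ∃ L : Submodule ℂ V, R ⊔ L = W ∧ finrank ℂ L = finrank ℂ R ∧
      ∀ v ∈ L, ∀ w ∈ L, B v w = 0 := by
  obtain ⟨C, hCd, hCs⟩ := exists_compl_in R W hRW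
  have hCW : C ≤ W := hCs ▸ le_sup_right
  have hCdim : finrank ℂ C = finrank ℂ R := by
    have h := Submodule.finrank_sup_add_finrank_inf_eq R C
    rw [hCs, hCd.eq_bot, finrank_bot] at h
    omega
  -- The pairing `R × C`, as a map from `R` to the dual of `C`.
  let p : R →ₗ[ℂ] (C →ₗ[ℂ] ℂ) := B.domRestrict₁₂ R C
  have hp : Function.Injective p := by
    rw [← LinearMap.ker_eq_bot, LinearMap.ker_eq_bot']
    rintro ⟨v, hv⟩ h
    refine Subtype.ext (hW v (hRW hv) fun w hw => ?_)
    rw [← hCs] at hw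
    obtain ⟨a, ha, c, hc, rfl⟩ := Submodule.mem_sup.1 hw
    have h1 : B v c = 0 := LinearMap.congr_fun h ⟨c, hc⟩
    rw [map_add, hR v hv a ha, h1, add_zero]
  have hpd : finrank ℂ R = finrank ℂ (C →ₗ[ℂ] ℂ) := by
    rw [← hCdim]; exact (Subspace.dual_finrank_eq (K := ℂ) (V := C)).symm
  let e := LinearEquiv.ofInjectiveOfFinrankEq p hp hpd
  let f : C →ₗ[ℂ] R := e.symm.toLinearMap ∘ₗ ((-1 / 2 : ℂ) • B.domRestrict₁₂ C C)
  have hf : ∀ c c' : C, B (f c) c' = (-1 / 2) * B c c' := by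
    intro c c'
    have h : p (f c) = (-1 / 2 : ℂ) • B.domRestrict₁₂ C C c :=
      e.apply_symm_apply ((-1 / 2 : ℂ) • B.domRestrict₁₂ C C c)
    exact LinearMap.congr_fun h c'
  let g : C →ₗ[ℂ] V := C.subtype + R.subtype ∘ₗ f
  have hg : ∀ c, g c = (c : V) + (f c : V) := fun c => rfl
  refine ⟨LinearMap.range g, ?_, ?_, ?_⟩
  · rw [← hCs]
    apply le_antisymm
    · refine sup_le le_sup_left ?_
      rintro _ ⟨c, rfl⟩
      rw [hg, add_comm]
      exact Submodule.add_mem_sup (f c).2 c.2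
    · refine sup_le le_sup_left fun c hc => ?_
      have h : c = -(f ⟨c, hc⟩ : V) + g ⟨c, hc⟩ := by rw [hg]; simp
      rw [h]
      exact Submodule.add_mem_sup (R.neg_mem (f _).2) ⟨_, rfl⟩
  · rw [← hCdim]
    apply LinearMap.finrank_range_of_inj
    rw [← LinearMap.ker_eq_bot, LinearMap.ker_eq_bot']
    intro c h
    have h1 : (c : V) ∈ R := by
      rw [hg] at h
      rw [eq_neg_of_add_eq_zero_left h]
      exact R.neg_mem (f c).2
    exact Subtype.ext (Submodule.disjoint_def.1 hCd _ h1 c.2)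
  · rintro _ ⟨c, rfl⟩ _ ⟨c', rfl⟩
    rw [hg, hg]
    simp only [map_add, LinearMap.add_apply]
    rw [hf, hR _ (f c).2 _ (f c').2]
    rcases hrefl with h | h
    · rw [h c (f c'), hf, h c' c]; ring
    · rw [h c (f c'), hf, h c' c]; ring

/-- Subspaces that span and whose dimensions add up to `dim V` are in direct sum. -/
lemma isInternal_of_finrank {V : Type*} [AddCommGroup V] [Module ℂ V] [FiniteDimensional ℂ V]
    (M : Fin 4 → Submodule ℂ V) (htop : ⨆ i, M i = ⊤)
    (hdim : ∑ i, finrank ℂ (M i) = finrank ℂ V) : DirectSum.IsInternal M := by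
  have hs : Function.Surjective (DirectSum.coeLinearMap M) := by
    rw [← LinearMap.range_eq_top, DirectSum.range_coeLinearMap, htop]
  have hd : finrank ℂ (DirectSum (Fin 4) fun i => M i) = finrank ℂ V := by
    rw [finrank_directSum, hdim]
  exact ⟨(LinearMap.injective_iff_surjective_of_finrank_eq_finrank hd).2 hs, hs⟩

/-- Lemma 3.1 (`lem:v4-decomp`): for a `k`-dimensional subspace `H` of a space `V` with a
nondegenerate symmetric or skew-symmetric bilinear form, with `r = k - dim (H ∩ H^⊥)`, there
is a decomposition `V = M₁ ⊕ M₂ ⊕ M₃ ⊕ M₄` adapted to `H` with the indicated dimensions and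
pairing properties (here indices `0,1,2,3` correspond to `1,2,3,4`). -/
theorem stmt_0 {V : Type*} [AddCommGroup V] [Module ℂ V] [FiniteDimensional ℂ V]
    (n : ℕ) (hn : finrank ℂ V = n)
    (B : V →ₗ[ℂ] V →ₗ[ℂ] ℂ)
    (hB : ∀ v, (∀ w, B v w = 0) → v = 0)
    (hrefl : (∀ v w, B v w = B w v) ∨ (∀ v w, B v w = - B w v))
    (H : Submodule ℂ V) (k : ℕ) (hk : finrank ℂ H = k)
    (r : ℕ) (hr : r = k - finrank ℂ ↥(H ⊓ bperp B H)) :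
    ∃ M : Fin 4 → Submodule ℂ V,
      DirectSum.IsInternal M ∧
      finrank ℂ ↥(M 0) = k - r ∧
      finrank ℂ ↥(M 1) = r ∧
      (finrank ℂ ↥(M 2) : ℤ) = (n : ℤ) - 2 * k + r ∧
      finrank ℂ ↥(M 3) = k - r ∧
      H ⊓ bperp B H = M 0 ∧
      H = M 0 ⊔ M 1 ∧
      bperp B H = M 0 ⊔ M 2 ∧
      (∀ v ∈ M 1, (∀ w ∈ M 1, B v w = 0) → v = 0) ∧
      (∀ v ∈ M 2, (∀ w ∈ M 2, B v w = 0) → v = 0) ∧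
      (∀ v ∈ M 0, (∀ w ∈ M 3, B v w = 0) → v = 0) ∧
      (∀ w ∈ M 3, (∀ v ∈ M 0, B v w = 0) → w = 0) ∧
      (∀ i j : Fin 4, (i, j) ∉ ({(0, 3), (3, 0), (1, 1), (2, 2)} : Set (Fin 4 × Fin 4)) →
        ∀ v ∈ M i, ∀ w ∈ M j, B v w = 0) := by
  have hs : ∀ {v w}, B v w = 0 → B w v = 0 := by
    intro v w h
    rcases hrefl with h' | h' <;> simp [h' w v, h]
  have hBr : LinearMap.BilinForm.IsRefl B := fun _ _ h => hs h
  have hBn : LinearMap.BilinForm.Nondegenerate B := by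
    rw [LinearMap.BilinForm.Nondegenerate, LinearMap.IsRefl.nondegenerate_iff_separatingLeft hBr]
    exact hB
  have hperp : ∀ K, bperp B K = LinearMap.BilinForm.orthogonal B K := fun K =>
    Submodule.ext fun v => ⟨fun h w hw => hs (h w hw), fun h w hw => hs (h w hw)⟩
  have hpp : bperp B (bperp B H) = H := by
    rw [hperp, hperp]; exact LinearMap.BilinForm.orthogonal_orthogonal hBn hBr H
  have hpd : ∀ K, finrank ℂ (bperp B K) = finrank ℂ V - finrank ℂ K := fun K => by
    rw [hperp]; exact LinearMap.BilinForm.finrank_orthogonal hBn K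
  set P := bperp B H with hP
  set R := H ⊓ P with hR
  have hRH : R ≤ H := inf_le_left
  have hRP : R ≤ P := inf_le_right
  have hPH : ∀ v ∈ P, ∀ w ∈ H, B v w = 0 := fun v hv => hv
  have hHP : ∀ v ∈ H, ∀ w ∈ P, B v w = 0 := fun v hv w hw => hs (hPH w hw v hv)
  obtain ⟨M₁, h1d, h1s⟩ := exists_compl_in R H hRH
  obtain ⟨M₂, h2d, h2s⟩ := exists_compl_in R P hRP
  have h1H : M₁ ≤ H := h1s ▸ le_sup_right
  have h2P : M₂ ≤ P := h2s ▸ le_sup_right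
  have hn1 : ∀ v ∈ M₁, (∀ w ∈ M₁, B v w = 0) → v = 0 := by
    intro v hv h
    refine Submodule.disjoint_def.1 h1d v ⟨h1H hv, fun w hw => ?_⟩ hv
    rw [← h1s] at hw
    obtain ⟨a, ha, b, hb, rfl⟩ := Submodule.mem_sup.1 hw
    rw [map_add, hHP v (h1H hv) a (hRP ha), h b hb, add_zero]
  have hn2 : ∀ v ∈ M₂, (∀ w ∈ M₂, B v w = 0) → v = 0 := by
    intro v hv h
    refine Submodule.disjoint_def.1 h2d v ⟨?_, h2P hv⟩ hv
    rw [← hpp]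
    intro w hw
    rw [← h2s] at hw
    obtain ⟨a, ha, b, hb, rfl⟩ := Submodule.mem_sup.1 hw
    rw [map_add, hPH v (h2P hv) a (hRH ha), h b hb, add_zero]
  set D := M₁ ⊔ M₂ with hD
  set W := bperp B D with hW
  have hDW : Disjoint D W := by
    rw [Submodule.disjoint_def]
    intro v hv hvW
    obtain ⟨a, ha, b, hb, rfl⟩ := Submodule.mem_sup.1 hv
    have ha0 : a = 0 := hn1 a ha fun w hw => by
      have h := hvW w (Submodule.mem_sup_left hw)
      rwa [map_add, LinearMap.add_apply, hPH b (h2P hb) w (h1H hw), add_zero] at h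
    have hb0 : b = 0 := hn2 b hb fun w hw => by
      have h := hvW w (Submodule.mem_sup_right hw)
      rwa [map_add, LinearMap.add_apply, hHP a (h1H ha) w (h2P hw), zero_add] at h
    rw [ha0, hb0, add_zero]
  have hDWtop : D ⊔ W = ⊤ := by
    have h : IsCompl D W := by
      rw [hW, hperp, LinearMap.BilinForm.isCompl_orthogonal_iff_disjoint hBr, ← hperp]
      exact hDW
    exact h.sup_eq_top
  have hWD : ∀ v ∈ W, ∀ w ∈ D, B v w = 0 := fun v hv => hv
  have hnW : ∀ v ∈ W, (∀ w ∈ W, B v w = 0) → v = 0 := by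
    intro v hv h
    refine hB v fun w => ?_
    have hw : w ∈ D ⊔ W := hDWtop ▸ Submodule.mem_top
    obtain ⟨a, ha, b, hb, rfl⟩ := Submodule.mem_sup.1 hw
    rw [map_add, hWD v hv a ha, h b hb, add_zero]
  have hRW : R ≤ W := by
    intro v hv w hw
    obtain ⟨a, ha, b, hb, rfl⟩ := Submodule.mem_sup.1 hw
    rw [map_add, hPH v (hRP hv) a (h1H ha), hHP v (hRH hv) b (h2P hb), add_zero]
  have hRR : ∀ v ∈ R, ∀ w ∈ R, B v w = 0 := fun v hv w hw => hPH v (hRP hv) w (hRH hw)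
  have h12 : M₁ ⊓ M₂ = ⊥ := by
    rw [eq_bot_iff]
    rintro v ⟨h1, h2⟩
    exact hn1 v h1 fun w hw => hPH v (h2P h2) w (h1H hw)
  have d1 := Submodule.finrank_sup_add_finrank_inf_eq R M₁
  rw [h1s, h1d.eq_bot, finrank_bot] at d1
  have d2 := Submodule.finrank_sup_add_finrank_inf_eq R M₂
  rw [h2s, h2d.eq_bot, finrank_bot] at d2
  have d3 := Submodule.finrank_sup_add_finrank_inf_eq M₁ M₂
  rw [h12, finrank_bot] at d3
  have dP := hpd H
  have dW := hpd D
  have leH := Submodule.finrank_le H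
  have leD := Submodule.finrank_le D
  rw [← hP] at dP
  rw [← hW] at dW
  rw [← hD] at d3
  obtain ⟨L, hLs, hLd, hLL⟩ := exists_isotropic_compl B hrefl R W hRW hRR hnW (by omega)
  have hLW : L ≤ W := hLs ▸ le_sup_right
  have hL1 : ∀ v ∈ L, ∀ w ∈ M₁, B v w = 0 := fun v hv w hw =>
    hWD v (hLW hv) w (Submodule.mem_sup_left hw)
  have hL2 : ∀ v ∈ L, ∀ w ∈ M₂, B v w = 0 := fun v hv w hw =>
    hWD v (hLW hv) w (Submodule.mem_sup_right hw)
  refine ⟨![R, M₁, M₂, L], ?_, ?_, ?_, ?_, ?_, rfl, h1s.symm, h2s.symm, hn1, hn2, ?_, ?_, ?_⟩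
  · apply isInternal_of_finrank
    · rw [eq_top_iff, ← hDWtop, ← hLs]
      exact sup_le (sup_le (le_iSup ![R, M₁, M₂, L] 1) (le_iSup ![R, M₁, M₂, L] 2))
        (sup_le (le_iSup ![R, M₁, M₂, L] 0) (le_iSup ![R, M₁, M₂, L] 3))
    · rw [Fin.sum_univ_four]
      change finrank ℂ R + finrank ℂ M₁ + finrank ℂ M₂ + finrank ℂ L = _
      omega
  · change finrank ℂ R = _
    omega
  · change finrank ℂ M₁ = _
    omega
  · change (finrank ℂ M₂ : ℤ) = _
    omega
  · change finrank ℂ L = _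
    omega
  · intro v (hv : v ∈ R) (h : ∀ w ∈ L, B v w = 0)
    refine hnW v (hRW hv) fun w hw => ?_
    rw [← hLs] at hw
    obtain ⟨a, ha, b, hb, rfl⟩ := Submodule.mem_sup.1 hw
    rw [map_add, hRR v hv a ha, h b hb, add_zero]
  · intro v (hv : v ∈ L) (h : ∀ w ∈ R, B w v = 0)
    refine hnW v (hLW hv) fun w hw => ?_
    rw [← hLs] at hw
    obtain ⟨a, ha, b, hb, rfl⟩ := Submodule.mem_sup.1 hw
    rw [map_add, hs (h a ha), hLL v hv b hb, add_zero]
  · intro i j hij v hv w hw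
    fin_cases i <;> fin_cases j <;> simp at hij
    · exact hRR v hv w hw
    · exact hPH v (hRP hv) w (h1H hw)
    · exact hHP v (hRH hv) w (h2P hw)
    · exact hHP v (h1H hv) w (hRP hw)
    · exact hHP v (h1H hv) w (h2P hw)
    · exact hs (hL1 w hw v hv)
    · exact hPH v (h2P hv) w (hRH hw)
    · exact hPH v (h2P hv) w (h1H hw)
    · exact hs (hL2 w hw v hv)
    · exact hL1 v hv w hw
    · exact hL2 v hv w hw
    · exact hLL v hv w hw
end

section
/- Let H, H' ⊆ V be subspaces with dim H = dim H' and dim(H ∩ H^⊥) = dim(H' ∩ H'^⊥). Then there exists an isometry g of V (a linear automorphism preserving ⟨−,−⟩) such that g(H) = H'. -/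
/-!
The theorem is proved for a pair of spaces `V`, `V'` of the same dimension, by induction on that
dimension: forms are `ε`-symmetric with `ε = ±1`, and the claim is that an isometry `V ≃ V'`
carries `H` to `H'` once `H`, `H'` and their radicals have equal dimensions.

The inductive step splits off a nondegenerate space `E` (a line or a hyperbolic plane) embedded
isometrically by `T : E → V` and `T' : E → V'`, so that `V ≅ E ⊕ (T E)^⊥`. If `H` is compatible with
this splitting, i.e. `H = T A ⊕ (H ∩ (T E)^⊥)` for some `A ≤ E`, then the dimensions of `H` and of
its radical are those of `A` plus those of `H ∩ (T E)^⊥` (`exists_splitting`). Hence, using the same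
`A` for `V'`, the induction hypothesis applies to the complements and its isometry is glued with
the identity of `E` (`glue_step`). A suitable `E` always exists:

* if `H` has a nonzero radical vector `r`, complete `r` to a hyperbolic pair `(r, s)` in `V`; here
  `E` is the hyperbolic plane and `A` the line spanned by `r`;
* if `H` is nondegenerate and nonzero, embed in `H` a unit vector (`ε = 1`) or a hyperbolic pair
  (`ε = -1`), with `A = E`;
* if `H = 0`, do the same in `V`, with `A = 0`.
-/

open Module

universe u

lemma finrank_submodule_prod {E F : Type*} [AddCommGroup E] [Module ℂ E] [FiniteDimensional ℂ E]
    [AddCommGroup F] [Module ℂ F] [FiniteDimensional ℂ F]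
    (A : Submodule ℂ E) (C : Submodule ℂ F) :
    finrank ℂ ↥(A.prod C) = finrank ℂ A + finrank ℂ C := by
  rw [← Module.finrank_prod]
  exact LinearEquiv.finrank_eq
    { toFun := fun p => (⟨p.1.1, p.2.1⟩, ⟨p.1.2, p.2.2⟩)
      invFun := fun q => ⟨(q.1, q.2), q.1.2, q.2.2⟩
      map_add' := fun _ _ => rfl
      map_smul' := fun _ _ => rfl
      left_inv := fun _ => rfl
      right_inv := fun _ => rfl }

/-- Every functional `⟨h, T -⟩` on a nondegenerate space `E` is represented by an element. -/
lemma exists_repr {E V : Type*} [AddCommGroup E] [Module ℂ E] [FiniteDimensional ℂ E]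
    [AddCommGroup V] [Module ℂ V]
    (G : E →ₗ[ℂ] E →ₗ[ℂ] ℂ) (hG : ∀ x, (∀ y, G x y = 0) → x = 0)
    (B : V →ₗ[ℂ] V →ₗ[ℂ] ℂ) (T : E →ₗ[ℂ] V) (h : V) : ∃ a, ∀ x, B h (T x) = G a x := by
  have hinj : Function.Injective G := by
    rw [injective_iff_map_eq_zero]
    intro x hx
    exact hG x (fun y => by rw [hx]; rfl)
  obtain ⟨a, ha⟩ := (LinearMap.injective_iff_surjective_of_finrank_eq_finrank
      (Subspace.dual_finrank_eq (K := ℂ) (V := E)).symm).1 hinj ((B h).comp T)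
  exact ⟨a, fun x => by rw [ha]; rfl⟩

/-- An isometric embedding `T` of a nondegenerate space `E` gives an orthogonal decomposition
`V ≅ E ⊕ (T E)^⊥`. If `H` contains `T A` and projects into `T A` along `(T E)^⊥`, both `H` and its
radical decompose accordingly. -/
lemma exists_splitting {E V : Type*} [AddCommGroup E] [Module ℂ E] [FiniteDimensional ℂ E]
    [AddCommGroup V] [Module ℂ V] [FiniteDimensional ℂ V]
    (G : E →ₗ[ℂ] E →ₗ[ℂ] ℂ) (hG : ∀ x, (∀ y, G x y = 0) → x = 0)
    (B : V →ₗ[ℂ] V →ₗ[ℂ] ℂ) (ε : ℂ) (hs : ∀ v w, B v w = ε * B w v)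
    (T : E →ₗ[ℂ] V) (hT : ∀ x y, B (T x) (T y) = G x y)
    (A : Submodule ℂ E) (H : Submodule ℂ V) (hA : ∀ a ∈ A, T a ∈ H)
    (hH : ∀ h ∈ H, ∃ a ∈ A, ∀ x, B h (T x) = G a x)
    (K : Submodule ℂ V) (hK : K = bperp B (LinearMap.range T)) :
    ∃ Φ : (E × K) ≃ₗ[ℂ] V,
      (∀ p q, B (Φ p) (Φ q) = G p.1 q.1 + B p.2 q.2) ∧
      (A.prod (H.comap K.subtype)).map (Φ : (E × K) →ₗ[ℂ] V) = H ∧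
      finrank ℂ H = finrank ℂ A + finrank ℂ (H.comap K.subtype) ∧
      finrank ℂ ↥(H ⊓ bperp B H) = finrank ℂ ↥(A ⊓ bperp G A) +
        finrank ℂ ↥(H.comap K.subtype ⊓
          bperp (B.domRestrict₁₂ K K) (H.comap K.subtype)) := by
  have hKT : ∀ k ∈ K, ∀ x, B k (T x) = 0 := by
    intro k hk x
    rw [hK] at hk
    exact hk _ ⟨x, rfl⟩
  have hTK : ∀ k ∈ K, ∀ x, B (T x) k = 0 := by
    intro k hk x
    rw [hs, hKT k hk, mul_zero]
  have hsub : ∀ v a, (∀ x, B v (T x) = G a x) → v - T a ∈ K := by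
    intro v a h
    rw [hK]
    rintro _ ⟨x, rfl⟩
    simp [h, hT]
  have hbij : Function.Bijective (T.coprod K.subtype) := by
    constructor
    · rw [injective_iff_map_eq_zero]
      rintro ⟨a, k⟩ h
      simp only [LinearMap.coprod_apply, Submodule.subtype_apply] at h
      have ha : a = 0 := by
        apply hG
        intro y
        have := congrArg (fun v => B v (T y)) h
        simpa [hT, hKT k k.2] using this
      subst ha
      simpa using h
    · intro v
      obtain ⟨a, ha⟩ := exists_repr G hG B T v
      have hv := hsub v a ha
      exact ⟨(a, ⟨_, hv⟩), by simp⟩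
  let Φ : (E × K) ≃ₗ[ℂ] V := LinearEquiv.ofBijective _ hbij
  have hΦ : ∀ a k, Φ (a, k) = T a + k := fun a k => by simp [Φ]
  have hform : ∀ p q, B (Φ p) (Φ q) = G p.1 q.1 + B p.2 q.2 := by
    rintro ⟨a, k⟩ ⟨b, l⟩
    simp [hΦ, hT, hKT k k.2, hTK l l.2]
  have hmem : ∀ a k, Φ (a, k) ∈ H ↔ a ∈ A ∧ (k : V) ∈ H := by
    intro a k
    rw [hΦ]
    constructor
    · intro h
      obtain ⟨b, hb, hbx⟩ := hH _ h
      have hab : a - b = 0 := by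
        apply hG
        intro y
        have := hbx y
        simp only [map_add, LinearMap.add_apply, hT, hKT k k.2, add_zero] at this
        simp [this]
      rw [sub_eq_zero] at hab
      subst hab
      exact ⟨hb, by simpa using H.sub_mem h (hA a hb)⟩
    · rintro ⟨ha, hk⟩
      exact H.add_mem (hA a ha) hk
  have hmap : (A.prod (H.comap K.subtype)).map (Φ : (E × K) →ₗ[ℂ] V) = H := by
    ext v
    constructor
    · rintro ⟨⟨a, k⟩, ⟨ha, hk⟩, rfl⟩
      exact (hmem a k).2 ⟨ha, hk⟩
    · intro hv
      obtain ⟨⟨a, k⟩, rfl⟩ := Φ.surjective v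
      exact ⟨(a, k), (hmem a k).1 hv, rfl⟩
  have hrad : ((A ⊓ bperp G A).prod (H.comap K.subtype ⊓
      bperp (B.domRestrict₁₂ K K) (H.comap K.subtype))).map (Φ : (E × K) →ₗ[ℂ] V)
      = H ⊓ bperp B H := by
    ext v
    constructor
    · rintro ⟨⟨a, k⟩, ⟨⟨ha, ha'⟩, ⟨hk, hk'⟩⟩, rfl⟩
      refine ⟨(hmem a k).2 ⟨ha, hk⟩, ?_⟩
      intro w hw
      obtain ⟨⟨b, l⟩, rfl⟩ := Φ.surjective w
      obtain ⟨hb, hl⟩ := (hmem b l).1 hw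
      have h1 := ha' b hb
      have h2 : B k l = 0 := hk' l hl
      change B (Φ (a, k)) (Φ (b, l)) = 0
      rw [hform]
      simp [h1, h2]
    · rintro ⟨hv, hv'⟩
      obtain ⟨⟨a, k⟩, rfl⟩ := Φ.surjective v
      obtain ⟨ha, hk⟩ := (hmem a k).1 hv
      refine ⟨(a, k), ⟨⟨ha, ?_⟩, ⟨hk, ?_⟩⟩, rfl⟩
      · intro b hb
        have := hv' (Φ (b, 0)) ((hmem b 0).2 ⟨hb, by simp⟩)
        rw [hform] at this
        simpa using this
      · intro l hl
        have := hv' (Φ (0, l)) ((hmem 0 l).2 ⟨A.zero_mem, hl⟩)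
        rw [hform] at this
        change B k l = 0
        simpa using this
  refine ⟨Φ, hform, hmap, ?_, ?_⟩
  · rw [← finrank_submodule_prod, ← LinearEquiv.finrank_map_eq Φ, hmap]
  · rw [← finrank_submodule_prod, ← LinearEquiv.finrank_map_eq Φ, hrad]

/-- The two-space form of the theorem for spaces of dimension `n`, as needed for induction. -/
def OrbitClaim (ε : ℂ) (n : ℕ) : Prop :=
  ∀ (V V' : Type u) [AddCommGroup V] [Module ℂ V] [FiniteDimensional ℂ V]
    [AddCommGroup V'] [Module ℂ V'] [FiniteDimensional ℂ V']
    (B : V →ₗ[ℂ] V →ₗ[ℂ] ℂ) (B' : V' →ₗ[ℂ] V' →ₗ[ℂ] ℂ)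
    (_ : ∀ v, (∀ w, B v w = 0) → v = 0) (_ : ∀ v, (∀ w, B' v w = 0) → v = 0)
    (_ : ∀ v w, B v w = ε * B w v) (_ : ∀ v w, B' v w = ε * B' w v)
    (H : Submodule ℂ V) (H' : Submodule ℂ V')
    (_ : finrank ℂ V = n) (_ : finrank ℂ V' = n)
    (_ : finrank ℂ H = finrank ℂ H')
    (_ : finrank ℂ ↥(H ⊓ bperp B H) = finrank ℂ ↥(H' ⊓ bperp B' H')),
    ∃ e : V ≃ₗ[ℂ] V', (∀ v w, B' (e v) (e w) = B v w) ∧ H.map (e : V →ₗ[ℂ] V') = H'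

/-- Restriction of a nondegenerate form to an orthogonal summand is nondegenerate. -/
lemma restrict_nondeg {E V : Type*} [AddCommGroup E] [Module ℂ E]
    [AddCommGroup V] [Module ℂ V] (G : E →ₗ[ℂ] E →ₗ[ℂ] ℂ) (B : V →ₗ[ℂ] V →ₗ[ℂ] ℂ)
    (hB : ∀ v, (∀ w, B v w = 0) → v = 0) (K : Submodule ℂ V) (Φ : (E × K) ≃ₗ[ℂ] V)
    (hΦ : ∀ p q, B (Φ p) (Φ q) = G p.1 q.1 + B p.2 q.2) :
    ∀ k, (∀ l, B.domRestrict₁₂ K K k l = 0) → k = 0 := by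
  intro k hk
  have h0 : Φ (0, k) = 0 := by
    apply hB
    intro w
    obtain ⟨⟨b, l⟩, rfl⟩ := Φ.surjective w
    rw [hΦ]
    have : B k l = 0 := hk l
    simp [this]
  simpa using h0

/-- The inductive step: isometric copies of `E` in `V` and `V'`, compatible with `H` and `H'` via
the same `A ≤ E`, reduce the claim to the orthogonal complements of these copies. -/
lemma glue_step {ε : ℂ} {n : ℕ} (ih : ∀ m < n, OrbitClaim.{u} ε m)
    {E : Type*} [AddCommGroup E] [Module ℂ E] [FiniteDimensional ℂ E] [Nontrivial E]
    (G : E →ₗ[ℂ] E →ₗ[ℂ] ℂ) (hG : ∀ x, (∀ y, G x y = 0) → x = 0)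
    {V V' : Type u} [AddCommGroup V] [Module ℂ V] [FiniteDimensional ℂ V]
    [AddCommGroup V'] [Module ℂ V'] [FiniteDimensional ℂ V']
    (B : V →ₗ[ℂ] V →ₗ[ℂ] ℂ) (B' : V' →ₗ[ℂ] V' →ₗ[ℂ] ℂ)
    (hB : ∀ v, (∀ w, B v w = 0) → v = 0) (hB' : ∀ v, (∀ w, B' v w = 0) → v = 0)
    (hs : ∀ v w, B v w = ε * B w v) (hs' : ∀ v w, B' v w = ε * B' w v)
    (H : Submodule ℂ V) (H' : Submodule ℂ V')
    (hn : finrank ℂ V = n) (hn' : finrank ℂ V' = n)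
    (hdim : finrank ℂ H = finrank ℂ H')
    (hrad : finrank ℂ ↥(H ⊓ bperp B H) = finrank ℂ ↥(H' ⊓ bperp B' H'))
    (A : Submodule ℂ E)
    (T : E →ₗ[ℂ] V) (hT : ∀ x y, B (T x) (T y) = G x y) (hA : ∀ a ∈ A, T a ∈ H)
    (hH : ∀ h ∈ H, ∃ a ∈ A, ∀ x, B h (T x) = G a x)
    (T' : E →ₗ[ℂ] V') (hT' : ∀ x y, B' (T' x) (T' y) = G x y) (hA' : ∀ a ∈ A, T' a ∈ H')
    (hH' : ∀ h ∈ H', ∃ a ∈ A, ∀ x, B' h (T' x) = G a x) :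
    ∃ e : V ≃ₗ[ℂ] V', (∀ v w, B' (e v) (e w) = B v w) ∧ H.map (e : V →ₗ[ℂ] V') = H' := by
  obtain ⟨Φ, hΦ, hm, hd, hr⟩ := exists_splitting G hG B ε hs T hT A H hA hH _ rfl
  obtain ⟨Φ', hΦ', hm', hd', hr'⟩ := exists_splitting G hG B' ε hs' T' hT' A H' hA' hH' _ rfl
  generalize bperp B (LinearMap.range T) = K at *
  generalize bperp B' (LinearMap.range T') = K' at *
  have hE : 0 < finrank ℂ E := finrank_pos
  have h1 := Φ.finrank_eq
  have h1' := Φ'.finrank_eq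
  rw [Module.finrank_prod] at h1 h1'
  obtain ⟨g, hg, hgm⟩ := ih (finrank ℂ K) (by omega) K K' (B.domRestrict₁₂ K K)
    (B'.domRestrict₁₂ K' K') (restrict_nondeg G B hB K Φ hΦ) (restrict_nondeg G B' hB' K' Φ' hΦ')
    (fun v w => hs v w) (fun v w => hs' v w) (H.comap K.subtype) (H'.comap K'.subtype)
    rfl (by omega) (by omega) (by omega)
  let F : (E × K) ≃ₗ[ℂ] (E × K') := (LinearEquiv.refl ℂ E).prodCongr g
  refine ⟨(Φ.symm.trans F).trans Φ', ?_, ?_⟩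
  · intro v w
    obtain ⟨⟨a, k⟩, rfl⟩ := Φ.surjective v
    obtain ⟨⟨b, l⟩, rfl⟩ := Φ.surjective w
    have : B' (g k) (g l) = B k l := hg k l
    simp [F, hΦ, hΦ', this]
  · apply Submodule.eq_of_le_of_finrank_eq
    · rintro _ ⟨v, hv, rfl⟩
      obtain ⟨⟨a, k⟩, rfl⟩ := Φ.surjective v
      rw [← hm] at hv
      obtain ⟨p, hp, hpe⟩ := hv
      obtain rfl := Φ.injective hpe
      rw [← hm']
      refine ⟨(a, g k), ⟨hp.1, ?_⟩, by simp [F]⟩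
      rw [← hgm]
      exact ⟨k, hp.2, rfl⟩
    · rw [LinearEquiv.finrank_map_eq, hdim]

/-- A vector `r` with `⟨r, r⟩ = 0` pairing nontrivially with `K` extends to a hyperbolic pair. -/
lemma exists_hyperbolic {ε : ℂ} (hε : ε = 1 ∨ ε = -1) {V : Type*} [AddCommGroup V] [Module ℂ V]
    (B : V →ₗ[ℂ] V →ₗ[ℂ] ℂ) (hs : ∀ v w, B v w = ε * B w v) (K : Submodule ℂ V)
    (r : V) (hr : r ∈ K) (hrr : B r r = 0) (hne : ∃ w ∈ K, B r w ≠ 0) :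
    ∃ s ∈ K, B r s = 1 ∧ B s s = 0 := by
  obtain ⟨w, hw, hrw⟩ := hne
  obtain ⟨t, ht, hrt⟩ : ∃ t ∈ K, B r t = 1 :=
    ⟨(B r w)⁻¹ • w, K.smul_mem _ hw, by simp [hrw]⟩
  refine ⟨t - (B t t / 2) • r, K.sub_mem ht (K.smul_mem _ hr), by simp [hrr, hrt], ?_⟩
  have htr : B t r = ε := by rw [hs, hrt, mul_one]
  have htt := hs t t
  simp only [map_sub, map_smul, LinearMap.sub_apply, LinearMap.smul_apply, smul_eq_mul, hrr, hrt,
    htr]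
  rcases hε with rfl | rfl
  · ring
  · linear_combination htt / 2

/-- The form on `ℂ²` with `⟨e₁, e₂⟩ = 1`, `⟨e₂, e₁⟩ = ε` and both basis vectors isotropic. -/
noncomputable def hypForm (ε : ℂ) : (ℂ × ℂ) →ₗ[ℂ] (ℂ × ℂ) →ₗ[ℂ] ℂ :=
  LinearMap.mk₂ ℂ (fun p q => p.1 * q.2 + ε * (p.2 * q.1))
    (by intros; simp; ring) (by intros; simp; ring) (by intros; simp; ring) (by intros; simp; ring)

lemma hypForm_apply (ε : ℂ) (p q : ℂ × ℂ) :
    hypForm ε p q = p.1 * q.2 + ε * (p.2 * q.1) := rfl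

lemma hypForm_nondeg {ε : ℂ} (hε : ε = 1 ∨ ε = -1) :
    ∀ x, (∀ y, hypForm ε x y = 0) → x = 0 := by
  rintro ⟨a, b⟩ h
  have h1 := h (0, 1)
  have h2 := h (1, 0)
  have h0 : ε ≠ 0 := by rcases hε with rfl | rfl <;> simp
  simp [hypForm_apply, h0] at h1 h2
  simp [h1, h2]

/-- The linear map `ℂ² → V` sending the standard basis to `(r, s)`. -/
noncomputable def pairMap {V : Type*} [AddCommGroup V] [Module ℂ V] (r s : V) :
    (ℂ × ℂ) →ₗ[ℂ] V :=
  (LinearMap.toSpanSingleton ℂ V r).coprod (LinearMap.toSpanSingleton ℂ V s)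

lemma pairMap_apply {V : Type*} [AddCommGroup V] [Module ℂ V] (r s : V) (p : ℂ × ℂ) :
    pairMap r s p = p.1 • r + p.2 • s := by
  simp [pairMap]

lemma pairMap_isometry {ε : ℂ} {V : Type*} [AddCommGroup V] [Module ℂ V]
    (B : V →ₗ[ℂ] V →ₗ[ℂ] ℂ) (hs : ∀ v w, B v w = ε * B w v) (r s : V)
    (hrr : B r r = 0) (hrs : B r s = 1) (hss : B s s = 0) (x y : ℂ × ℂ) :
    B (pairMap r s x) (pairMap r s y) = hypForm ε x y := by
  have hsr : B s r = ε := by rw [hs, hrs, mul_one]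
  simp [pairMap_apply, hypForm_apply, hrr, hrs, hss, hsr]
  ring

/-- For each sign there is one nonzero nondegenerate space embedding isometrically in every nonzero
nondegenerate subspace: the unit line for `ε = 1`, the hyperbolic plane for `ε = -1`. -/
lemma exists_model {ε : ℂ} (hε : ε = 1 ∨ ε = -1) :
    ∃ (E : Type) (_ : AddCommGroup E) (_ : Module ℂ E) (_ : FiniteDimensional ℂ E)
      (_ : Nontrivial E) (G : E →ₗ[ℂ] E →ₗ[ℂ] ℂ),
      (∀ x, (∀ y, G x y = 0) → x = 0) ∧
      ∀ (V : Type u) [AddCommGroup V] [Module ℂ V] (B : V →ₗ[ℂ] V →ₗ[ℂ] ℂ)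
        (_ : ∀ v w, B v w = ε * B w v) (K : Submodule ℂ V) (_ : K ≠ ⊥)
        (_ : K ⊓ bperp B K = ⊥),
        ∃ T : E →ₗ[ℂ] V, (∀ x y, B (T x) (T y) = G x y) ∧ ∀ x, T x ∈ K := by
  have key : ∀ (V : Type u) [AddCommGroup V] [Module ℂ V] (B : V →ₗ[ℂ] V →ₗ[ℂ] ℂ)
      (K : Submodule ℂ V) (_ : K ≠ ⊥) (_ : K ⊓ bperp B K = ⊥),
      ∃ r ∈ K, ∃ w ∈ K, B r w ≠ 0 := by
    intro V _ _ B K hK hrad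
    obtain ⟨r, hr, hr0⟩ := K.ne_bot_iff.1 hK
    refine ⟨r, hr, ?_⟩
    by_contra! h
    have : r ∈ K ⊓ bperp B K := ⟨hr, h⟩
    rw [hrad] at this
    exact hr0 (by simpa using this)
  rcases hε with rfl | rfl
  · refine ⟨ℂ, inferInstance, inferInstance, inferInstance, inferInstance, LinearMap.mul ℂ ℂ,
      fun x h => by simpa using h 1, ?_⟩
    intro V _ _ B hs K hK hrad
    obtain ⟨r, hr, w, hw, hrw⟩ := key V B K hK hrad
    -- By polarization some vector of `K` is anisotropic; rescale it to norm `1`.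
    obtain ⟨q, hq, hqq⟩ : ∃ q ∈ K, B q q ≠ 0 := by
      by_contra! h
      have h1 := h _ (K.add_mem hr hw)
      simp only [map_add, LinearMap.add_apply, h r hr, h w hw, hs w r] at h1
      apply hrw
      linear_combination h1 / 2
    obtain ⟨c, hc⟩ := IsAlgClosed.exists_pow_nat_eq (B q q)⁻¹ (n := 2) (by norm_num)
    refine ⟨LinearMap.toSpanSingleton ℂ V (c • q), ?_, ?_⟩
    · intro x y
      have : c ^ 2 * B q q = 1 := by rw [hc, inv_mul_cancel₀ hqq]
      simp
      linear_combination x * y * this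
    · intro x
      exact K.smul_mem _ (K.smul_mem _ hq)
  · refine ⟨ℂ × ℂ, inferInstance, inferInstance, inferInstance, inferInstance, hypForm (-1),
      hypForm_nondeg (Or.inr rfl), ?_⟩
    intro V _ _ B hs K hK hrad
    obtain ⟨r, hr, hne⟩ := key V B K hK hrad
    have hrr : B r r = 0 := by
      have := hs r r
      linear_combination this / 2
    obtain ⟨s, hsK, hrs, hss⟩ := exists_hyperbolic (Or.inr rfl) B hs K r hr hrr hne
    refine ⟨pairMap r s, pairMap_isometry B hs r s hrr hrs hss, ?_⟩
    intro x
    rw [pairMap_apply]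
    exact K.add_mem (K.smul_mem _ hr) (K.smul_mem _ hsK)

/-- A nonzero radical vector `r` of `H` yields an embedded hyperbolic plane meeting `H` in the line
spanned by `r` and compatible with `H`. -/
lemma exists_radical_plane {ε : ℂ} (hε : ε = 1 ∨ ε = -1) {V : Type*} [AddCommGroup V] [Module ℂ V]
    (B : V →ₗ[ℂ] V →ₗ[ℂ] ℂ) (hB : ∀ v, (∀ w, B v w = 0) → v = 0)
    (hs : ∀ v w, B v w = ε * B w v) (H : Submodule ℂ V) (hne : H ⊓ bperp B H ≠ ⊥) :
    ∃ T : (ℂ × ℂ) →ₗ[ℂ] V, (∀ x y, B (T x) (T y) = hypForm ε x y) ∧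
      (∀ a ∈ Submodule.prod (⊤ : Submodule ℂ ℂ) (⊥ : Submodule ℂ ℂ), T a ∈ H) ∧
      (∀ h ∈ H, ∃ a ∈ Submodule.prod (⊤ : Submodule ℂ ℂ) (⊥ : Submodule ℂ ℂ),
        ∀ x, B h (T x) = hypForm ε a x) := by
  obtain ⟨r, ⟨hrH, hrp⟩, hr0⟩ := (Submodule.ne_bot_iff _).1 hne
  have hrr : B r r = 0 := hrp r hrH
  have hw : ∃ w ∈ (⊤ : Submodule ℂ V), B r w ≠ 0 := by
    by_contra! h
    exact hr0 (hB r fun w => h w trivial)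
  obtain ⟨s, -, hrs, hss⟩ := exists_hyperbolic hε B hs ⊤ r trivial hrr hw
  refine ⟨pairMap r s, pairMap_isometry B hs r s hrr hrs hss, ?_, ?_⟩
  · rintro ⟨a, b⟩ ⟨-, hb⟩
    obtain rfl : b = 0 := by simpa using hb
    rw [pairMap_apply]
    simpa using H.smul_mem a hrH
  · intro h hh
    have hhr : B h r = 0 := by rw [hs, hrp h hh, mul_zero]
    refine ⟨(B h s, 0), ⟨trivial, by simp⟩, fun x => ?_⟩
    simp [pairMap_apply, hypForm_apply, hhr, mul_comm]

theorem orbitClaim {ε : ℂ} (hε : ε = 1 ∨ ε = -1) (n : ℕ) : OrbitClaim.{u} ε n := by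
  induction n using Nat.strong_induction_on with
  | _ n ih =>
  intro V V' _ _ _ _ _ _ B B' hB hB' hs hs' H H' hn hn' hdim hrad
  by_cases hR : H ⊓ bperp B H = ⊥
  · have hR' : H' ⊓ bperp B' H' = ⊥ := by
      rw [← Submodule.finrank_eq_zero (R := ℂ), ← hrad, hR, finrank_bot]
    obtain ⟨E, _, _, _, _, G, hG, hmodel⟩ := exists_model.{u} hε
    by_cases h0 : H = ⊥
    · have h0' : H' = ⊥ := by
        rw [← Submodule.finrank_eq_zero (R := ℂ), ← hdim, h0, finrank_bot]
      subst h0 h0'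
      rcases Nat.eq_zero_or_pos n with hz | hz
      · have : Subsingleton V := finrank_zero_iff.1 (hn.trans hz)
        refine ⟨LinearEquiv.ofFinrankEq V V' (hn.trans hn'.symm), ?_, by simp⟩
        intro v w
        simp [Subsingleton.elim v 0]
      · have : Nontrivial V := nontrivial_of_finrank_pos (R := ℂ) (by omega)
        have : Nontrivial V' := nontrivial_of_finrank_pos (R := ℂ) (by omega)
        obtain ⟨T, hT, -⟩ := hmodel V B hs ⊤ top_ne_bot (by
          rw [eq_bot_iff]
          rintro v ⟨-, hv⟩
          simpa using hB v fun w => hv w trivial)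
        obtain ⟨T', hT', -⟩ := hmodel V' B' hs' ⊤ top_ne_bot (by
          rw [eq_bot_iff]
          rintro v ⟨-, hv⟩
          simpa using hB' v fun w => hv w trivial)
        refine glue_step ih G hG B B' hB hB' hs hs' ⊥ ⊥ hn hn' hdim hrad ⊥ T hT ?_ ?_ T' hT' ?_ ?_
        all_goals simp
    · have h0' : H' ≠ ⊥ := by
        rintro rfl
        rw [finrank_bot, Submodule.finrank_eq_zero] at hdim
        exact h0 hdim
      obtain ⟨T, hT, hTH⟩ := hmodel V B hs H h0 hR
      obtain ⟨T', hT', hTH'⟩ := hmodel V' B' hs' H' h0' hR'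
      refine glue_step ih G hG B B' hB hB' hs hs' H H' hn hn' hdim hrad ⊤ T hT
        (fun a _ => hTH a) ?_ T' hT' (fun a _ => hTH' a) ?_
      · intro h _
        obtain ⟨a, ha⟩ := exists_repr G hG B T h
        exact ⟨a, trivial, ha⟩
      · intro h _
        obtain ⟨a, ha⟩ := exists_repr G hG B' T' h
        exact ⟨a, trivial, ha⟩
  · have hR' : H' ⊓ bperp B' H' ≠ ⊥ := by
      intro h
      rw [h, finrank_bot, Submodule.finrank_eq_zero] at hrad
      exact hR hrad
    obtain ⟨T, hT, hA, hH⟩ := exists_radical_plane hε B hB hs H hR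
    obtain ⟨T', hT', hA', hH'⟩ := exists_radical_plane hε B' hB' hs' H' hR'
    exact glue_step ih (hypForm ε) (hypForm_nondeg hε) B B' hB hB' hs hs' H H' hn hn' hdim hrad
      _ T hT hA hH T' hT' hA' hH'

/-- Lemma 3.2 (`lem:v4-orbit`), first part: if `H, H'` are subspaces of `V` with
`dim H = dim H'` and `dim (H ∩ H^⊥) = dim (H' ∩ H'^⊥)`, then some isometry of the
nondegenerate symmetric or skew-symmetric form carries `H` to `H'`. -/
theorem stmt_1 {V : Type*} [AddCommGroup V] [Module ℂ V] [FiniteDimensional ℂ V]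
    (B : V →ₗ[ℂ] V →ₗ[ℂ] ℂ)
    (hB : ∀ v, (∀ w, B v w = 0) → v = 0)
    (hrefl : (∀ v w, B v w = B w v) ∨ (∀ v w, B v w = - B w v))
    (H H' : Submodule ℂ V)
    (hdim : finrank ℂ H = finrank ℂ H')
    (hrad : finrank ℂ ↥(H ⊓ bperp B H) = finrank ℂ ↥(H' ⊓ bperp B H')) :
    ∃ g : V ≃ₗ[ℂ] V, (∀ v w, B (g v) (g w) = B v w) ∧
      Submodule.map (g : V →ₗ[ℂ] V) H = H' := by
  rcases hrefl with h | h
  · exact orbitClaim (ε := 1) (Or.inl rfl) _ V V B B hB hB (by simpa using h) (by simpa using h)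
      H H' rfl rfl hdim hrad
  · exact orbitClaim (ε := -1) (Or.inr rfl) _ V V B B hB hB (by simpa using h) (by simpa using h)
      H H' rfl rfl hdim hrad
end

section
/- Let H, H' ⊆ V be subspaces with dim H = dim H' = k and dim(H ∩ H^⊥) = dim(H' ∩ H'^⊥) = k − r. Assume that either (a) the form ⟨−,−⟩ is skew-symmetric, or (b) the form ⟨−,−⟩ is symmetric and r > 0 or n − 2k + r > 0. Then there exists an isometry g of V with det g = 1 such that g(H) = H'. -/
/-!
The argument is a Witt-type theorem followed by a correction of the determinant.

Write `ε = ±1` for the symmetry of the form. Two subspaces `H ⊆ V`, `H' ⊆ V'` of nondegenerate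
`ε`-symmetric spaces of equal dimension correspond under an isometry `V ≃ V'` once `dim H = dim H'`
and their radicals have equal dimension (`witt_radical`). Allowing two different ambient spaces
makes an induction on `dim V` possible: in both spaces one splits off a nondegenerate subspace
spanned by a frame with one and the same Gram matrix, and passes to its orthogonal complement
(`glue`). If `H` is not totally isotropic, the frame is a unit vector or a hyperbolic pair inside
`H`; if `H` is totally isotropic and nonzero, it is a hyperbolic pair whose first vector lies in
`H`; if `H = 0`, it is any unit vector or hyperbolic pair of `V` (`witt_isotropic`).

In the skew-symmetric case every isometry has determinant `1` (`det_isometry_of_skew`). If `1 + g`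
is invertible this holds because `1 + g` and `1 + g⁻¹ = g⁻¹ (1 + g)` are adjoint and so have the
same determinant; in general, composing `g` with transvections makes `1 + g` invertible.

In the symmetric case `det g = ±1`. The numerical hypothesis says that `H` or `H^⊥` is not totally
isotropic, so one of them contains a unit vector, and the reflection in it preserves `H`
(`exists_det_neg_one_stabilizer`). Precomposing with it repairs the sign.
-/

open Module

/-! ### Determinants of isometries -/

section Determinants

variable {V : Type*} [AddCommGroup V] [Module ℂ V]

/-- Endomorphisms adjoint with respect to a nondegenerate form have equal determinants. -/
lemma det_eq_of_adjoint [FiniteDimensional ℂ V]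
    (B : V →ₗ[ℂ] V →ₗ[ℂ] ℂ) (hB : ∀ v, (∀ w, B v w = 0) → v = 0)
    (a c : V →ₗ[ℂ] V) (h : ∀ x y, B (a x) y = B x (c y)) :
    LinearMap.det a = LinearMap.det c := by
  classical
  let b := Module.finBasis ℂ V
  have hdet : (LinearMap.toMatrix₂ b b B).det ≠ 0 :=
    (LinearMap.separatingLeft_iff_det_ne_zero b).mp hB
  have hac : B.comp a = B.compl₂ c := by
    ext x y
    exact h x y
  have hm := congrArg (fun f => (LinearMap.toMatrix₂ b b f).det) hac
  simp only [LinearMap.toMatrix₂_comp b b b, LinearMap.toMatrix₂_compl₂ b b b, Matrix.det_mul,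
    Matrix.det_transpose, LinearMap.det_toMatrix] at hm
  exact mul_right_cancel₀ hdet (hm.trans (mul_comm _ _))

lemma isometry_adjoint (B : V →ₗ[ℂ] V →ₗ[ℂ] ℂ) (g : V ≃ₗ[ℂ] V)
    (hg : ∀ v w, B (g v) (g w) = B v w) (x y : V) : B (g x) y = B x (g.symm y) := by
  rw [← hg x (g.symm y), g.apply_symm_apply]

lemma det_isometry_sq [FiniteDimensional ℂ V]
    (B : V →ₗ[ℂ] V →ₗ[ℂ] ℂ) (hB : ∀ v, (∀ w, B v w = 0) → v = 0)
    (g : V ≃ₗ[ℂ] V) (hg : ∀ v w, B (g v) (g w) = B v w) :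
    LinearMap.det (g : V →ₗ[ℂ] V) * LinearMap.det (g : V →ₗ[ℂ] V) = 1 := by
  have h := det_eq_of_adjoint B hB g g.symm (isometry_adjoint B g hg)
  nth_rewrite 2 [h]
  exact g.det_mul_det_symm

/-- Cayley's observation: since `1 + g` and `1 + g⁻¹ = g⁻¹ (1 + g)` are adjoint, an isometry
without eigenvalue `-1` has determinant `1`. -/
lemma det_isometry_of_ker_eq_bot [FiniteDimensional ℂ V]
    (B : V →ₗ[ℂ] V →ₗ[ℂ] ℂ)
    (hB : ∀ v, (∀ w, B v w = 0) → v = 0)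
    (g : V ≃ₗ[ℂ] V) (hg : ∀ v w, B (g v) (g w) = B v w)
    (hker : LinearMap.ker (LinearMap.id + (g : V →ₗ[ℂ] V)) = ⊥) :
    LinearMap.det (g : V →ₗ[ℂ] V) = 1 := by
  have h := det_eq_of_adjoint B hB (LinearMap.id + (g : V →ₗ[ℂ] V))
    (LinearMap.id + (g.symm : V →ₗ[ℂ] V)) (fun x y => by
      simp [isometry_adjoint B g hg])
  have h2 : LinearMap.id + (g : V →ₗ[ℂ] V)
      = (g : V →ₗ[ℂ] V) ∘ₗ (LinearMap.id + (g.symm : V →ₗ[ℂ] V)) := by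
    ext x
    simp [add_comm]
  have h3 : LinearMap.det (LinearMap.id + (g : V →ₗ[ℂ] V)) ≠ 0 := fun h0 =>
    (LinearMap.bot_lt_ker_of_det_eq_zero h0).ne' hker
  have h4 := congrArg LinearMap.det h2
  rw [LinearMap.det_comp, ← h] at h4
  exact mul_right_cancel₀ h3 (by rw [← h4, one_mul])

/-- The symplectic transvection `x ↦ x + ⟨x, u⟩ u`. -/
noncomputable def sympTransvection (B : V →ₗ[ℂ] V →ₗ[ℂ] ℂ) (hs : ∀ v w, B v w = - B w v)
    (u : V) : V ≃ₗ[ℂ] V :=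
  have hu : B u u = 0 := self_eq_neg.mp (hs u u)
  LinearEquiv.ofLinearMap (LinearMap.id + (B.flip u).smulRight u)
    (LinearMap.id - (B.flip u).smulRight u)
    (by ext x; simp [hu]) (by ext x; simp [hu])

lemma sympTransvection_apply (B : V →ₗ[ℂ] V →ₗ[ℂ] ℂ) (hs : ∀ v w, B v w = - B w v)
    (u x : V) : sympTransvection B hs u x = x + B x u • u := rfl

lemma sympTransvection_isometry (B : V →ₗ[ℂ] V →ₗ[ℂ] ℂ) (hs : ∀ v w, B v w = - B w v)
    (u x y : V) : B (sympTransvection B hs u x) (sympTransvection B hs u y) = B x y := by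
  have hu : B u u = 0 := self_eq_neg.mp (hs u u)
  simp only [sympTransvection_apply, map_add, map_smul, LinearMap.add_apply,
    LinearMap.smul_apply, smul_eq_mul, hu, hs u y]
  ring

lemma det_sympTransvection [FiniteDimensional ℂ V]
    (B : V →ₗ[ℂ] V →ₗ[ℂ] ℂ) (hs : ∀ v w, B v w = - B w v) (u : V) :
    LinearMap.det (sympTransvection B hs u : V →ₗ[ℂ] V) = 1 := by
  have hu : B u u = 0 := self_eq_neg.mp (hs u u)
  have h := LinearMap.transvection.det (B.flip u) u
  rw [LinearMap.flip_apply, hu, add_zero] at h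
  rw [← h]
  congr 1

/-- An isometry of a symplectic space has determinant `1`. Induction on the dimension of the
eigenspace `K = ker (1 + g)`: if `u` is not orthogonal to `K`, composing `g` with the
transvection along `u` replaces `K` by `K ∩ u^⊥`, because `range (1 + g) ⊆ K^⊥`. -/
lemma det_isometry_of_skew [FiniteDimensional ℂ V]
    (B : V →ₗ[ℂ] V →ₗ[ℂ] ℂ) (hB : ∀ v, (∀ w, B v w = 0) → v = 0)
    (hs : ∀ v w, B v w = - B w v) :
    ∀ (m : ℕ) (g : V ≃ₗ[ℂ] V), (∀ v w, B (g v) (g w) = B v w) →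
      finrank ℂ (LinearMap.ker (LinearMap.id + (g : V →ₗ[ℂ] V))) ≤ m →
      LinearMap.det (g : V →ₗ[ℂ] V) = 1 := by
  intro m
  induction m with
  | zero =>
    intro g hg hm
    exact det_isometry_of_ker_eq_bot B hB g hg (Submodule.finrank_eq_zero.mp (by omega))
  | succ m ih =>
    intro g hg hm
    by_cases hker : LinearMap.ker (LinearMap.id + (g : V →ₗ[ℂ] V)) = ⊥
    · exact det_isometry_of_ker_eq_bot B hB g hg hker
    obtain ⟨v, hv, hv0⟩ := Submodule.exists_mem_ne_zero_of_ne_bot hker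
    have hgv : g v = -v := by
      have : v + g v = 0 := by simpa using hv
      exact (neg_eq_of_add_eq_zero_right this).symm
    obtain ⟨u, hu⟩ : ∃ u, B v u ≠ 0 := by
      by_contra! hcon
      exact hv0 (hB v hcon)
    let g' := g.trans (sympTransvection B hs u)
    have hg' : ∀ x y, B (g' x) (g' y) = B x y := fun x y => by
      rw [LinearEquiv.trans_apply, LinearEquiv.trans_apply, sympTransvection_isometry, hg]
    have hle : LinearMap.ker (LinearMap.id + (g' : V →ₗ[ℂ] V)) <
        LinearMap.ker (LinearMap.id + (g : V →ₗ[ℂ] V)) := by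
      have key : ∀ x ∈ LinearMap.ker (LinearMap.id + (g' : V →ₗ[ℂ] V)),
          B (g x) u = 0 ∧ x + g x = 0 := by
        intro x hx
        have hx' : x + (g x + B (g x) u • u) = 0 := by
          simpa [g', sympTransvection_apply] using hx
        have h1 : B v (x + g x) = 0 := by
          have : B v (g x) = - B v x := by
            rw [← hg v x, hgv]; simp
          rw [map_add, this, add_neg_cancel]
        have h2 : B (g x) u * B v u = 0 := by
          have := congrArg (B v) hx'
          rw [← add_assoc, map_add, h1, map_smul, map_zero, zero_add] at this
          simpa using this
        have h3 := (mul_eq_zero.mp h2).resolve_right hu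
        refine ⟨h3, ?_⟩
        rw [h3] at hx'
        simpa using hx'
      refine lt_of_le_of_ne (fun x hx => by simpa using (key x hx).2) fun heq => ?_
      have := (key v (heq ▸ hv)).1
      rw [hgv] at this
      exact hu (by simpa using this)
    have hdet := ih g' hg' (by have := Submodule.finrank_lt_finrank_of_lt hle; omega)
    have hcomp : (g' : V →ₗ[ℂ] V) =
      (sympTransvection B hs u : V →ₗ[ℂ] V) ∘ₗ (g : V →ₗ[ℂ] V) := rfl
    rwa [hcomp, LinearMap.det_comp, det_sympTransvection, one_mul] at hdet

/-- The orthogonal reflection in the hyperplane `u^⊥`. -/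
lemma exists_reflection [FiniteDimensional ℂ V]
    (B : V →ₗ[ℂ] V →ₗ[ℂ] ℂ) (hs : ∀ v w, B v w = B w v)
    (u : V) (hu : B u u ≠ 0) :
    ∃ s : V ≃ₗ[ℂ] V, (∀ x y, B (s x) (s y) = B x y) ∧
      LinearMap.det (s : V →ₗ[ℂ] V) = -1 ∧ ∀ x, s x = x - (2 * B x u / B u u) • u := by
  let f : Module.Dual ℂ V := (-2 / B u u) • B.flip u
  have hf : ∀ x, LinearMap.transvection f u x = x - (2 * B x u / B u u) • u := fun x => by
    simp only [LinearMap.transvection.apply, f, LinearMap.smul_apply, LinearMap.flip_apply,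
      smul_eq_mul]
    rw [sub_eq_add_neg, ← neg_smul]
    congr 2
    ring
  have hinv : LinearMap.transvection f u ∘ₗ LinearMap.transvection f u = LinearMap.id := by
    ext x
    simp only [LinearMap.comp_apply, hf, LinearMap.id_apply, map_sub, map_smul,
      LinearMap.sub_apply, LinearMap.smul_apply, smul_eq_mul]
    rw [sub_sub, ← add_smul, sub_eq_self]
    convert zero_smul ℂ u
    field_simp
    ring
  refine ⟨LinearEquiv.ofLinearMap _ _ hinv hinv, fun x y => ?_, ?_, hf⟩
  · change B (LinearMap.transvection f u x) (LinearMap.transvection f u y) = _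
    simp only [hf, map_sub, map_smul, LinearMap.sub_apply, LinearMap.smul_apply, smul_eq_mul,
      hs u y]
    field_simp
    ring
  · change LinearMap.det (LinearMap.transvection f u) = -1
    rw [LinearMap.transvection.det]
    simp only [f, LinearMap.smul_apply, LinearMap.flip_apply, smul_eq_mul]
    field_simp
    norm_num

end Determinants

/-! ### Splitting off nondegenerate subspaces -/

section Frames

variable {V : Type*} [AddCommGroup V] [Module ℂ V] {ι : Type*}

lemma gram_sum [Fintype ι] (B : V →ₗ[ℂ] V →ₗ[ℂ] ℂ) (p : ι → V) (G : Matrix ι ι ℂ)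
    (hp : ∀ i j, B (p i) (p j) = G i j) (c : ι → ℂ) (j : ι) :
    B (∑ i, c i • p i) (p j) = Matrix.vecMul c G j := by
  simp [Matrix.vecMul, dotProduct, hp]

lemma mem_bperp_span (B : V →ₗ[ℂ] V →ₗ[ℂ] ℂ) (p : ι → V) (x : V) :
    x ∈ bperp B (Submodule.span ℂ (Set.range p)) ↔ ∀ j, B x (p j) = 0 := by
  refine ⟨fun h j => h _ (Submodule.subset_span ⟨j, rfl⟩), fun h w hw => ?_⟩
  have : Submodule.span ℂ (Set.range p) ≤ LinearMap.ker (B x) :=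
    Submodule.span_le.mpr (by rintro _ ⟨j, rfl⟩; exact h j)
  exact this hw

variable [Fintype ι] [DecidableEq ι]

lemma gram_linearIndependent (B : V →ₗ[ℂ] V →ₗ[ℂ] ℂ) (p : ι → V) (G : Matrix ι ι ℂ)
    (hG : G.det ≠ 0) (hp : ∀ i j, B (p i) (p j) = G i j) : LinearIndependent ℂ p := by
  rw [Fintype.linearIndependent_iff]
  intro c hc
  have h : Matrix.vecMul c G = 0 := by
    ext j
    rw [← gram_sum B p G hp, hc]
    simp
  exact congrFun (Matrix.eq_zero_of_vecMul_eq_zero hG h)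

/-- A subspace with invertible Gram matrix splits off its orthogonal complement. -/
lemma gram_isCompl (B : V →ₗ[ℂ] V →ₗ[ℂ] ℂ) (p : ι → V) (G : Matrix ι ι ℂ)
    (hG : G.det ≠ 0) (hp : ∀ i j, B (p i) (p j) = G i j) :
    IsCompl (Submodule.span ℂ (Set.range p))
      (bperp B (Submodule.span ℂ (Set.range p))) := by
  constructor
  · rw [Submodule.disjoint_def]
    intro x hx hx'
    obtain ⟨c, rfl⟩ := (Submodule.mem_span_range_iff_exists_fun ℂ).mp hx
    rw [mem_bperp_span] at hx'
    have h : Matrix.vecMul c G = 0 := by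
      ext j
      rw [← gram_sum B p G hp, hx' j]
      rfl
    simp [Matrix.eq_zero_of_vecMul_eq_zero hG h]
  · rw [codisjoint_iff, eq_top_iff]
    intro x _
    let c : ι → ℂ := Matrix.vecMul (fun j => B x (p j)) G⁻¹
    rw [← add_sub_cancel (∑ i, c i • p i) x]
    refine Submodule.add_mem_sup
      ((Submodule.mem_span_range_iff_exists_fun ℂ).mpr ⟨c, rfl⟩) ?_
    rw [mem_bperp_span]
    intro j
    rw [map_sub, LinearMap.sub_apply, gram_sum B p G hp, Matrix.vecMul_vecMul,
      Matrix.nonsing_inv_mul _ (isUnit_iff_ne_zero.mpr hG), Matrix.vecMul_one, sub_self]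

/-- If the part `span (p '' S)` of the frame `p` accounts for the component of `H` along
`span p`, then `dim H` is `|S|` plus the dimension of the trace of `H` on the complement. -/
lemma finrank_comap_bperp [FiniteDimensional ℂ V] (B : V →ₗ[ℂ] V →ₗ[ℂ] ℂ) (p : ι → V)
    (G : Matrix ι ι ℂ) (hG : G.det ≠ 0) (hp : ∀ i j, B (p i) (p j) = G i j)
    (H : Submodule ℂ V) (S : Finset ι) (hSH : ∀ i ∈ S, p i ∈ H)
    (hS : ∀ x ∈ H, ∃ y ∈ Submodule.span ℂ (p '' S),
      x - y ∈ bperp B (Submodule.span ℂ (Set.range p))) :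
    S.card + finrank ℂ (H.comap (bperp B (Submodule.span ℂ (Set.range p))).subtype)
      = finrank ℂ H := by
  set Q := bperp B (Submodule.span ℂ (Set.range p)) with hQ
  classical
  have hli := gram_linearIndependent B p G hG hp
  have h1 : finrank ℂ (Submodule.span ℂ (p '' S)) = S.card := by
    rw [← Finset.coe_image, finrank_span_finset_eq_card,
      Finset.card_image_of_injective _ hli.injective]
    rw [Finset.coe_image]
    exact (hli.linearIndepOn_id).mono (Set.image_subset_range _ _)
  have hle : Submodule.span ℂ (p '' S) ≤ H :=
    Submodule.span_le.mpr (by rintro _ ⟨i, hi, rfl⟩; exact hSH i hi)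
  have h2 : finrank ℂ (H.comap Q.subtype) = finrank ℂ ↥(Q ⊓ H) := by
    rw [← Submodule.map_comap_subtype]
    exact (Submodule.finrank_map_subtype_eq _ _).symm
  have h3 : Submodule.span ℂ (p '' S) ⊔ (Q ⊓ H) = H := by
    refine le_antisymm (sup_le hle inf_le_right) fun x hx => ?_
    obtain ⟨y, hy, hxy⟩ := hS x hx
    rw [← add_sub_cancel y x]
    exact Submodule.add_mem_sup hy ⟨hxy, H.sub_mem hx (hle hy)⟩
  have h4 : Submodule.span ℂ (p '' S) ⊓ (Q ⊓ H) = ⊥ :=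
    ((gram_isCompl B p G hG hp).disjoint.mono (Submodule.span_mono (Set.image_subset_range _ _))
      inf_le_left).eq_bot
  have h5 := Submodule.finrank_sup_add_finrank_inf_eq (Submodule.span ℂ (p '' S)) (Q ⊓ H)
  rw [h3, h4, finrank_bot, h1] at h5
  omega

/-- The complement of a nondegenerate subspace is nondegenerate. -/
lemma nondegenerate_bperp (B : V →ₗ[ℂ] V →ₗ[ℂ] ℂ) (hB : ∀ v, (∀ w, B v w = 0) → v = 0)
    (p : ι → V) (G : Matrix ι ι ℂ) (hG : G.det ≠ 0) (hp : ∀ i j, B (p i) (p j) = G i j)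
    (q : bperp B (Submodule.span ℂ (Set.range p)))
    (hq : ∀ w, B.domRestrict₁₂ (bperp B (Submodule.span ℂ (Set.range p)))
      (bperp B (Submodule.span ℂ (Set.range p))) q w = 0) : q = 0 := by
  apply Subtype.ext
  refine hB _ fun w => ?_
  have hw : w ∈ Submodule.span ℂ (Set.range p) ⊔ bperp B (Submodule.span ℂ (Set.range p)) := by
    rw [(gram_isCompl B p G hG hp).sup_eq_top]
    trivial
  obtain ⟨a, ha, b, hb, rfl⟩ := Submodule.mem_sup.mp hw
  rw [map_add, q.2 a ha, zero_add]
  exact hq ⟨b, hb⟩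

end Frames

/-- Two frames with the same invertible Gram matrix, together with an isometry `ψ` between their
orthogonal complements, determine an isometry of the ambient spaces. -/
lemma glue {V V' : Type*} [AddCommGroup V] [Module ℂ V] [AddCommGroup V'] [Module ℂ V']
    {ι : Type*} [Fintype ι] [DecidableEq ι] (ε : ℂ)
    (B : V →ₗ[ℂ] V →ₗ[ℂ] ℂ) (B' : V' →ₗ[ℂ] V' →ₗ[ℂ] ℂ)
    (hε : ∀ v w, B v w = ε * B w v) (hε' : ∀ v w, B' v w = ε * B' w v)
    (p : ι → V) (p' : ι → V') (G : Matrix ι ι ℂ) (hG : G.det ≠ 0)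
    (hp : ∀ i j, B (p i) (p j) = G i j) (hp' : ∀ i j, B' (p' i) (p' j) = G i j)
    (H : Submodule ℂ V) (H' : Submodule ℂ V') (S : Finset ι)
    (hSH : ∀ i ∈ S, p i ∈ H) (hSH' : ∀ i ∈ S, p' i ∈ H')
    (hS : ∀ x ∈ H, ∃ y ∈ Submodule.span ℂ (p '' S),
      x - y ∈ bperp B (Submodule.span ℂ (Set.range p)))
    (ψ : bperp B (Submodule.span ℂ (Set.range p)) ≃ₗ[ℂ]
      bperp B' (Submodule.span ℂ (Set.range p')))
    (hψ : ∀ x y, B' (ψ x) (ψ y) = B x y)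
    (hψH : ∀ x : bperp B (Submodule.span ℂ (Set.range p)), (x : V) ∈ H → (ψ x : V') ∈ H') :
    ∃ g : V ≃ₗ[ℂ] V', (∀ x y, B' (g x) (g y) = B x y) ∧ ∀ x ∈ H, g x ∈ H' := by
  have hli := gram_linearIndependent B p G hG hp
  have hli' := gram_linearIndependent B' p' G hG hp'
  have hc := gram_isCompl B p G hG hp
  have hc' := gram_isCompl B' p' G hG hp'
  let φ : Submodule.span ℂ (Set.range p) ≃ₗ[ℂ] Submodule.span ℂ (Set.range p') :=
    (Basis.span hli).equiv (Basis.span hli') (Equiv.refl ι)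
  let g : V ≃ₗ[ℂ] V' := (Submodule.prodEquivOfIsCompl _ _ hc).symm.trans
    ((φ.prodCongr ψ).trans (Submodule.prodEquivOfIsCompl _ _ hc'))
  have hgP : ∀ x : Submodule.span ℂ (Set.range p), g x = φ x := fun x => by
    simp only [g, LinearEquiv.trans_apply, Submodule.prodEquivOfIsCompl_symm_apply_left]
    simp
  have hgQ : ∀ x : bperp B (Submodule.span ℂ (Set.range p)), g x = ψ x := fun x => by
    simp only [g, LinearEquiv.trans_apply, Submodule.prodEquivOfIsCompl_symm_apply_right]
    simp
  have hgp : ∀ i, g (p i) = p' i := fun i => by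
    have h1 : ((Basis.span hli i : Submodule.span ℂ (Set.range p)) : V) = p i :=
      congrArg Subtype.val (Basis.span_apply hli i)
    rw [← h1, hgP, Basis.equiv_apply, Equiv.refl_apply]
    exact congrArg Subtype.val (Basis.span_apply hli' i)
  have hPP : ∀ x y : Submodule.span ℂ (Set.range p), B' (g x) (g y) = B x y := by
    rintro ⟨x, hx⟩ ⟨y, hy⟩
    obtain ⟨c, rfl⟩ := (Submodule.mem_span_range_iff_exists_fun ℂ).mp hx
    obtain ⟨d, rfl⟩ := (Submodule.mem_span_range_iff_exists_fun ℂ).mp hy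
    simp [hgp, hp, hp']
  refine ⟨g, fun x y => ?_, fun x hx => ?_⟩
  · have hx : x ∈ Submodule.span ℂ (Set.range p) ⊔
        bperp B (Submodule.span ℂ (Set.range p)) := by rw [hc.sup_eq_top]; trivial
    have hy : y ∈ Submodule.span ℂ (Set.range p) ⊔
        bperp B (Submodule.span ℂ (Set.range p)) := by rw [hc.sup_eq_top]; trivial
    obtain ⟨a, ha, b, hb, rfl⟩ := Submodule.mem_sup.mp hx
    obtain ⟨c, hc, d, hd, rfl⟩ := Submodule.mem_sup.mp hy
    have h1 : B' (g a) (g c) = B a c := hPP ⟨a, ha⟩ ⟨c, hc⟩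
    have h2 : B' (g b) (g d) = B b d := by
      rw [hgQ ⟨b, hb⟩, hgQ ⟨d, hd⟩]
      exact hψ _ _
    have h3 : B' (g b) (g c) = 0 := by
      rw [hgQ ⟨b, hb⟩, hgP ⟨c, hc⟩]
      exact (ψ _).2 _ (φ _).2
    have h4 : B' (g a) (g d) = 0 := by
      rw [hε', hgQ ⟨d, hd⟩, hgP ⟨a, ha⟩, (ψ _).2 _ (φ _).2, mul_zero]
    have h5 : B b c = 0 := hb c hc
    have h6 : B a d = 0 := by rw [hε, hd a ha, mul_zero]
    simp [h1, h2, h3, h4, h5, h6]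
  · obtain ⟨y, hy, hxy⟩ := hS x hx
    have hle : Submodule.span ℂ (p '' S) ≤ H ⊓ H'.comap (g : V →ₗ[ℂ] V') := by
      refine Submodule.span_le.mpr ?_
      rintro _ ⟨i, hi, rfl⟩
      refine ⟨hSH i hi, ?_⟩
      change g (p i) ∈ H'
      rw [hgp]
      exact hSH' i hi
    rw [← add_sub_cancel y x, map_add]
    refine H'.add_mem (hle hy).2 ?_
    rw [hgQ ⟨x - y, hxy⟩]
    exact hψH _ (H.sub_mem hx (hle hy).1)

/-! ### Existence of frames -/

lemma exists_unit_of_not_isotropic {V : Type*} [AddCommGroup V] [Module ℂ V]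
    (B : V →ₗ[ℂ] V →ₗ[ℂ] ℂ) (hs : ∀ v w, B v w = B w v) (H : Submodule ℂ V)
    (hH : ¬ ∀ x ∈ H, ∀ y ∈ H, B x y = 0) : ∃ u ∈ H, B u u = 1 := by
  obtain ⟨v, hv, hvv⟩ : ∃ v ∈ H, B v v ≠ 0 := by
    by_contra! hcon
    refine hH fun x hx y hy => ?_
    have h := hcon (x + y) (H.add_mem hx hy)
    simp only [map_add, LinearMap.add_apply, hcon x hx, hcon y hy, hs y x] at h
    linear_combination h / 2
  obtain ⟨c, hc⟩ := IsAlgClosed.exists_pow_nat_eq (B v v)⁻¹ (n := 2) (by norm_num)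
  refine ⟨c • v, H.smul_mem c hv, ?_⟩
  simp only [map_smul, LinearMap.smul_apply, smul_eq_mul]
  rw [← mul_assoc, ← sq, hc, inv_mul_cancel₀ hvv]

lemma exists_pair_of_not_isotropic {V : Type*} [AddCommGroup V] [Module ℂ V]
    (B : V →ₗ[ℂ] V →ₗ[ℂ] ℂ) (hs : ∀ v w, B v w = - B w v) (H : Submodule ℂ V)
    (hH : ¬ ∀ x ∈ H, ∀ y ∈ H, B x y = 0) :
    ∃ p : Fin 2 → V, (∀ i j, B (p i) (p j) = !![0, 1; -1, 0] i j) ∧ ∀ i, p i ∈ H := by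
  push Not at hH
  obtain ⟨x, hx, y, hy, hxy⟩ := hH
  have h0 : ∀ z, B z z = 0 := fun z => self_eq_neg.mp (hs z z)
  refine ⟨![x, (B x y)⁻¹ • y], fun i j => ?_, fun i => ?_⟩
  · fin_cases i <;> fin_cases j <;> simp [h0, hxy, hs y x]
  · fin_cases i
    · exact hx
    · exact H.smul_mem _ hy

/-- Non-isotropic subspaces of two `ε`-symmetric spaces contain frames with a common invertible
Gram matrix: a unit vector if `ε = 1`, a hyperbolic pair if `ε = -1`. -/
lemma exists_frames {V V' : Type*} [AddCommGroup V] [Module ℂ V] [AddCommGroup V'] [Module ℂ V']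
    (ε : ℂ) (hε1 : ε = 1 ∨ ε = -1)
    (B : V →ₗ[ℂ] V →ₗ[ℂ] ℂ) (B' : V' →ₗ[ℂ] V' →ₗ[ℂ] ℂ)
    (hε : ∀ v w, B v w = ε * B w v) (hε' : ∀ v w, B' v w = ε * B' w v)
    (H : Submodule ℂ V) (H' : Submodule ℂ V')
    (hH : ¬ ∀ x ∈ H, ∀ y ∈ H, B x y = 0) (hH' : ¬ ∀ x ∈ H', ∀ y ∈ H', B' x y = 0) :
    ∃ (m : ℕ) (G : Matrix (Fin m) (Fin m) ℂ) (p : Fin m → V) (p' : Fin m → V'),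
      0 < m ∧ G.det ≠ 0 ∧ (∀ i j, B (p i) (p j) = G i j) ∧ (∀ i j, B' (p' i) (p' j) = G i j) ∧
      (∀ i, p i ∈ H) ∧ (∀ i, p' i ∈ H') := by
  rcases hε1 with rfl | rfl
  · obtain ⟨u, hu, hu1⟩ := exists_unit_of_not_isotropic B (by simpa using hε) H hH
    obtain ⟨u', hu', hu1'⟩ := exists_unit_of_not_isotropic B' (by simpa using hε') H' hH'
    refine ⟨1, 1, fun _ => u, fun _ => u', one_pos, by simp, fun i j => ?_, fun i j => ?_,
      fun _ => hu, fun _ => hu'⟩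
    · rw [Subsingleton.elim i j, Matrix.one_apply_eq, hu1]
    · rw [Subsingleton.elim i j, Matrix.one_apply_eq, hu1']
  · obtain ⟨p, hp, hpH⟩ := exists_pair_of_not_isotropic B (by simpa using hε) H hH
    obtain ⟨p', hp', hpH'⟩ := exists_pair_of_not_isotropic B' (by simpa using hε') H' hH'
    exact ⟨2, _, p, p', two_pos, by simp [Matrix.det_fin_two], hp, hp', hpH, hpH'⟩

/-- A nonzero isotropic vector `e` of a nondegenerate space is part of a hyperbolic pair. -/
lemma exists_hyperbolic_partner {V : Type*} [AddCommGroup V] [Module ℂ V]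
    (ε : ℂ) (hε1 : ε = 1 ∨ ε = -1) (B : V →ₗ[ℂ] V →ₗ[ℂ] ℂ)
    (hB : ∀ v, (∀ w, B v w = 0) → v = 0) (hε : ∀ v w, B v w = ε * B w v)
    (e : V) (he : e ≠ 0) (hee : B e e = 0) :
    ∃ f : V, ∀ i j, B (![e, f] i) (![e, f] j) = !![0, 1; ε, 0] i j := by
  obtain ⟨w, hw⟩ : ∃ w, B e w ≠ 0 := by
    by_contra! hcon
    exact he (hB e hcon)
  let f₀ := (B e w)⁻¹ • w
  have h1 : B e f₀ = 1 := by simp [f₀, hw]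
  have h2 : B f₀ e = ε := by rw [hε, h1, mul_one]
  -- For `ε = -1` the correction term vanishes, since the form is then alternating.
  let f := f₀ - (B f₀ f₀ / 2) • e
  have h3 : B e f = 1 := by simp [f, h1, hee]
  have h4 : B f e = ε := by rw [hε, h3, mul_one]
  have h5 : B f f = 0 := by
    have h := hε f₀ f₀
    simp only [f, map_sub, map_smul, LinearMap.sub_apply, LinearMap.smul_apply, smul_eq_mul,
      h1, h2, hee]
    rcases hε1 with rfl | rfl
    · ring
    · linear_combination h / 2
  refine ⟨f, fun i j => ?_⟩
  fin_cases i <;> fin_cases j <;> simp [hee, h3, h4, h5]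

/-! ### Witt-type theorems -/

/-- Witt's theorem for totally isotropic subspaces: in two nondegenerate `ε`-symmetric spaces of
the same dimension, totally isotropic subspaces of the same dimension correspond under an
isometry. For `H = H' = 0` this is the classification of such spaces by their dimension. -/
lemma witt_isotropic.{u} (ε : ℂ) (hε1 : ε = 1 ∨ ε = -1) (N : ℕ) :
    ∀ (V V' : Type u) [AddCommGroup V] [Module ℂ V] [FiniteDimensional ℂ V]
      [AddCommGroup V'] [Module ℂ V'] [FiniteDimensional ℂ V']
      (B : V →ₗ[ℂ] V →ₗ[ℂ] ℂ) (B' : V' →ₗ[ℂ] V' →ₗ[ℂ] ℂ)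
      (_ : ∀ v, (∀ w, B v w = 0) → v = 0) (_ : ∀ v, (∀ w, B' v w = 0) → v = 0)
      (_ : ∀ v w, B v w = ε * B w v) (_ : ∀ v w, B' v w = ε * B' w v)
      (H : Submodule ℂ V) (H' : Submodule ℂ V')
      (_ : finrank ℂ V = N) (_ : finrank ℂ V' = N) (_ : finrank ℂ H = finrank ℂ H')
      (_ : ∀ x ∈ H, ∀ y ∈ H, B x y = 0) (_ : ∀ x ∈ H', ∀ y ∈ H', B' x y = 0),
      ∃ g : V ≃ₗ[ℂ] V', (∀ x y, B' (g x) (g y) = B x y) ∧ ∀ x ∈ H, g x ∈ H' := by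
  induction N using Nat.strong_induction_on with
  | _ N ih =>
  intro V V' _ _ _ _ _ _ B B' hB hB' hε hε' H H' hN hN' hH hiso hiso'
  -- Splitting off frames `p`, `p'` of size `m` whose part `S` lies in `H`, `H'`.
  have step : ∀ (m : ℕ) (G : Matrix (Fin m) (Fin m) ℂ) (p : Fin m → V) (p' : Fin m → V')
      (S : Finset (Fin m)), 0 < m → G.det ≠ 0 → (∀ i j, B (p i) (p j) = G i j) →
      (∀ i j, B' (p' i) (p' j) = G i j) → (∀ i ∈ S, p i ∈ H) → (∀ i ∈ S, p' i ∈ H') →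
      (∀ x ∈ H, ∃ y ∈ Submodule.span ℂ (p '' S),
        x - y ∈ bperp B (Submodule.span ℂ (Set.range p))) →
      (∀ x ∈ H', ∃ y ∈ Submodule.span ℂ (p' '' S),
        x - y ∈ bperp B' (Submodule.span ℂ (Set.range p'))) →
      ∃ g : V ≃ₗ[ℂ] V', (∀ x y, B' (g x) (g y) = B x y) ∧ ∀ x ∈ H, g x ∈ H' := by
    intro m G p p' S hm hG hp hp' hSH hSH' hS hS'
    have hd := Submodule.finrank_add_eq_of_isCompl (gram_isCompl B p G hG hp)
    have hd' := Submodule.finrank_add_eq_of_isCompl (gram_isCompl B' p' G hG hp')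
    rw [finrank_span_eq_card (gram_linearIndependent B p G hG hp), Fintype.card_fin] at hd
    rw [finrank_span_eq_card (gram_linearIndependent B' p' G hG hp'), Fintype.card_fin] at hd'
    have hf := finrank_comap_bperp B p G hG hp H S hSH hS
    have hf' := finrank_comap_bperp B' p' G hG hp' H' S hSH' hS'
    obtain ⟨ψ, hψ, hψH⟩ := ih (N - m) (by omega)
      (bperp B (Submodule.span ℂ (Set.range p))) (bperp B' (Submodule.span ℂ (Set.range p')))
      (B.domRestrict₁₂ _ _) (B'.domRestrict₁₂ _ _)
      (nondegenerate_bperp B hB p G hG hp) (nondegenerate_bperp B' hB' p' G hG hp')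
      (fun v w => hε v w) (fun v w => hε' v w)
      (H.comap (Submodule.subtype _)) (H'.comap (Submodule.subtype _))
      (by omega) (by omega) (by omega)
      (fun x hx y hy => hiso x hx y hy) (fun x hx y hy => hiso' x hx y hy)
    exact glue ε B B' hε hε' p p' G hG hp hp' H H' S hSH hSH' hS ψ hψ hψH
  by_cases hbot : H = ⊥
  · have hbot' : H' = ⊥ := by
      rw [← Submodule.finrank_eq_zero, ← hH, hbot, finrank_bot]
    subst hbot hbot'
    rcases Nat.eq_zero_or_pos N with h0 | hpos
    · have := finrank_zero_iff.mp (hN.trans h0)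
      refine ⟨LinearEquiv.ofFinrankEq V V' (hN.trans hN'.symm), fun x y => ?_, fun x hx => ?_⟩
      · rw [Subsingleton.elim x 0]
        simp
      · rw [Subsingleton.elim x 0]
        simp
    · have nontriv : ∀ (W : Type u) [AddCommGroup W] [Module ℂ W] [FiniteDimensional ℂ W]
          (C : W →ₗ[ℂ] W →ₗ[ℂ] ℂ) (_ : ∀ v, (∀ w, C v w = 0) → v = 0) (_ : 0 < finrank ℂ W),
          ¬ ∀ x ∈ (⊤ : Submodule ℂ W), ∀ y ∈ (⊤ : Submodule ℂ W), C x y = 0 := by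
        intro W _ _ _ C hC hW hcon
        have := Module.finrank_pos_iff.mp hW
        obtain ⟨w, hw⟩ := exists_ne (0 : W)
        exact hw (hC w fun y => hcon w trivial y trivial)
      obtain ⟨m, G, p, p', hm, hG, hp, hp', -, -⟩ := exists_frames ε hε1 B B' hε hε' ⊤ ⊤
        (nontriv V B hB (by omega)) (nontriv V' B' hB' (by omega))
      refine step m G p p' ∅ hm hG hp hp' (by simp) (by simp) ?_ ?_
      · rintro x hx
        rw [(Submodule.mem_bot ℂ).mp hx]
        exact ⟨0, zero_mem _, by simp⟩
      · rintro x hx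
        rw [(Submodule.mem_bot ℂ).mp hx]
        exact ⟨0, zero_mem _, by simp⟩
  · have hbot' : H' ≠ ⊥ := by
      rwa [ne_eq, ← Submodule.finrank_eq_zero, ← hH, Submodule.finrank_eq_zero]
    obtain ⟨e, he, he0⟩ := Submodule.exists_mem_ne_zero_of_ne_bot hbot
    obtain ⟨e', he', he0'⟩ := Submodule.exists_mem_ne_zero_of_ne_bot hbot'
    obtain ⟨f, hf⟩ := exists_hyperbolic_partner ε hε1 B hB hε e he0 (hiso e he e he)
    obtain ⟨f', hf'⟩ := exists_hyperbolic_partner ε hε1 B' hB' hε' e' he0' (hiso' e' he' e' he')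
    have hε0 : ε ≠ 0 := by rcases hε1 with rfl | rfl <;> norm_num
    refine step 2 _ ![e, f] ![e', f'] {0} two_pos (by simpa [Matrix.det_fin_two] using hε0)
      hf hf' (by simpa using he) (by simpa using he') (fun x hx => ?_) (fun x hx => ?_)
    · have hef : B e f = 1 := by simpa using hf 0 1
      refine ⟨B x f • e, Submodule.smul_mem _ _ (Submodule.subset_span (by simp)), ?_⟩
      rw [mem_bperp_span, Fin.forall_fin_two]
      simp [hiso x hx e he, hiso e he e he, hef]
    · have hef : B' e' f' = 1 := by simpa using hf' 0 1
      refine ⟨B' x f' • e', Submodule.smul_mem _ _ (Submodule.subset_span (by simp)), ?_⟩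
      rw [mem_bperp_span, Fin.forall_fin_two]
      simp [hiso' x hx e' he', hiso' e' he' e' he', hef]

lemma isotropic_iff_finrank_radical {V : Type*} [AddCommGroup V] [Module ℂ V]
    [FiniteDimensional ℂ V] (B : V →ₗ[ℂ] V →ₗ[ℂ] ℂ) (H : Submodule ℂ V) :
    (∀ x ∈ H, ∀ y ∈ H, B x y = 0) ↔ finrank ℂ ↥(H ⊓ bperp B H) = finrank ℂ H := by
  refine ⟨fun h => ?_, fun h x hx y hy => ?_⟩
  · rw [inf_eq_left.mpr (show H ≤ bperp B H from h)]
  · have := Submodule.eq_of_le_of_finrank_eq inf_le_left h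
    rw [← this] at hx
    exact hx.2 y hy

/-- Splitting a nondegenerate subspace `span p ⊆ H` off `H` does not change the radical. -/
lemma finrank_radical_comap {V : Type*} [AddCommGroup V] [Module ℂ V]
    {ι : Type*} [Fintype ι] [DecidableEq ι] (B : V →ₗ[ℂ] V →ₗ[ℂ] ℂ)
    (p : ι → V) (G : Matrix ι ι ℂ) (hG : G.det ≠ 0)
    (hp : ∀ i j, B (p i) (p j) = G i j) (H : Submodule ℂ V) (hpH : ∀ i, p i ∈ H) :
    let Q := bperp B (Submodule.span ℂ (Set.range p))
    finrank ℂ ↥(H.comap Q.subtype ⊓ bperp (B.domRestrict₁₂ Q Q) (H.comap Q.subtype)) =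
      finrank ℂ ↥(H ⊓ bperp B H) := by
  intro Q
  have hle : Submodule.span ℂ (Set.range p) ≤ H :=
    Submodule.span_le.mpr (by rintro _ ⟨i, rfl⟩; exact hpH i)
  rw [← Submodule.finrank_map_subtype_eq Q]
  suffices hmap : (H.comap Q.subtype ⊓ bperp (B.domRestrict₁₂ Q Q) (H.comap Q.subtype)).map
      Q.subtype = H ⊓ bperp B H by rw [hmap]
  ext x
  simp only [Submodule.mem_map, Submodule.mem_inf]
  constructor
  · rintro ⟨q, ⟨hq, hq'⟩, rfl⟩
    refine ⟨hq, fun w hw => ?_⟩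
    have hw' : w ∈ Submodule.span ℂ (Set.range p) ⊔ Q := by
      rw [(gram_isCompl B p G hG hp).sup_eq_top]
      trivial
    obtain ⟨a, ha, b, hb, rfl⟩ := Submodule.mem_sup.mp hw'
    have hbH : b ∈ H := (Submodule.add_mem_iff_right H (hle ha)).mp hw
    change B q (a + b) = 0
    rw [map_add, q.2 a ha, zero_add]
    exact hq' ⟨b, hb⟩ hbH
  · rintro ⟨hx, hx'⟩
    exact ⟨⟨x, fun w hw => hx' w (hle hw)⟩, ⟨hx, fun w hw => hx' w hw⟩, rfl⟩

/-- Subspaces of nondegenerate `ε`-symmetric spaces of the same dimension correspond under an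
isometry as soon as their dimensions and the dimensions of their radicals agree. -/
lemma witt_radical.{u} (ε : ℂ) (hε1 : ε = 1 ∨ ε = -1) (N : ℕ) :
    ∀ (V V' : Type u) [AddCommGroup V] [Module ℂ V] [FiniteDimensional ℂ V]
      [AddCommGroup V'] [Module ℂ V'] [FiniteDimensional ℂ V']
      (B : V →ₗ[ℂ] V →ₗ[ℂ] ℂ) (B' : V' →ₗ[ℂ] V' →ₗ[ℂ] ℂ)
      (_ : ∀ v, (∀ w, B v w = 0) → v = 0) (_ : ∀ v, (∀ w, B' v w = 0) → v = 0)
      (_ : ∀ v w, B v w = ε * B w v) (_ : ∀ v w, B' v w = ε * B' w v)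
      (H : Submodule ℂ V) (H' : Submodule ℂ V')
      (_ : finrank ℂ V = N) (_ : finrank ℂ V' = N) (_ : finrank ℂ H = finrank ℂ H')
      (_ : finrank ℂ ↥(H ⊓ bperp B H) = finrank ℂ ↥(H' ⊓ bperp B' H')),
      ∃ g : V ≃ₗ[ℂ] V', (∀ x y, B' (g x) (g y) = B x y) ∧ ∀ x ∈ H, g x ∈ H' := by
  induction N using Nat.strong_induction_on with
  | _ N ih =>
  intro V V' _ _ _ _ _ _ B B' hB hB' hε hε' H H' hN hN' hH hR
  by_cases hiso : ∀ x ∈ H, ∀ y ∈ H, B x y = 0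
  · have hiso' : ∀ x ∈ H', ∀ y ∈ H', B' x y = 0 := by
      rw [isotropic_iff_finrank_radical] at hiso ⊢
      omega
    exact witt_isotropic ε hε1 N V V' B B' hB hB' hε hε' H H' hN hN' hH hiso hiso'
  have hiso' : ¬ ∀ x ∈ H', ∀ y ∈ H', B' x y = 0 := by
    rw [isotropic_iff_finrank_radical] at hiso ⊢
    omega
  obtain ⟨m, G, p, p', hm, hG, hp, hp', hpH, hpH'⟩ :=
    exists_frames ε hε1 B B' hε hε' H H' hiso hiso'
  have hd := Submodule.finrank_add_eq_of_isCompl (gram_isCompl B p G hG hp)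
  have hd' := Submodule.finrank_add_eq_of_isCompl (gram_isCompl B' p' G hG hp')
  rw [finrank_span_eq_card (gram_linearIndependent B p G hG hp), Fintype.card_fin] at hd
  rw [finrank_span_eq_card (gram_linearIndependent B' p' G hG hp'), Fintype.card_fin] at hd'
  have hS : ∀ x ∈ H, ∃ y ∈ Submodule.span ℂ (p '' (Finset.univ : Finset (Fin m))),
      x - y ∈ bperp B (Submodule.span ℂ (Set.range p)) := by
    intro x _
    have hx : x ∈ Submodule.span ℂ (Set.range p) ⊔ bperp B (Submodule.span ℂ (Set.range p)) := by
      rw [(gram_isCompl B p G hG hp).sup_eq_top]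
      trivial
    obtain ⟨a, ha, b, hb, rfl⟩ := Submodule.mem_sup.mp hx
    exact ⟨a, by simpa using ha, by simpa using hb⟩
  have hS' : ∀ x ∈ H', ∃ y ∈ Submodule.span ℂ (p' '' (Finset.univ : Finset (Fin m))),
      x - y ∈ bperp B' (Submodule.span ℂ (Set.range p')) := by
    intro x _
    have hx : x ∈ Submodule.span ℂ (Set.range p') ⊔
        bperp B' (Submodule.span ℂ (Set.range p')) := by
      rw [(gram_isCompl B' p' G hG hp').sup_eq_top]
      trivial
    obtain ⟨a, ha, b, hb, rfl⟩ := Submodule.mem_sup.mp hx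
    exact ⟨a, by simpa using ha, by simpa using hb⟩
  have hf := finrank_comap_bperp B p G hG hp H Finset.univ (fun i _ => hpH i) hS
  have hf' := finrank_comap_bperp B' p' G hG hp' H' Finset.univ (fun i _ => hpH' i) hS'
  have hr := finrank_radical_comap B p G hG hp H hpH
  have hr' := finrank_radical_comap B' p' G hG hp' H' hpH'
  obtain ⟨ψ, hψ, hψH⟩ := ih (N - m) (by omega)
    (bperp B (Submodule.span ℂ (Set.range p))) (bperp B' (Submodule.span ℂ (Set.range p')))
    (B.domRestrict₁₂ _ _) (B'.domRestrict₁₂ _ _)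
    (nondegenerate_bperp B hB p G hG hp) (nondegenerate_bperp B' hB' p' G hG hp')
    (fun v w => hε v w) (fun v w => hε' v w)
    (H.comap (Submodule.subtype _)) (H'.comap (Submodule.subtype _))
    (by omega) (by omega) (by omega) (hr.trans (hR.trans hr'.symm))
  exact glue ε B B' hε hε' p p' G hG hp hp' H H' Finset.univ (fun i _ => hpH i)
    (fun i _ => hpH' i) hS ψ hψ hψH

/-- If `H` or `H^⊥` is not totally isotropic, some reflection preserves `H`; the numerical
hypotheses say exactly this, as `H^⊥` is totally isotropic only if it equals `H ∩ H^⊥`. -/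
lemma exists_det_neg_one_stabilizer {V : Type*} [AddCommGroup V] [Module ℂ V]
    [FiniteDimensional ℂ V] (B : V →ₗ[ℂ] V →ₗ[ℂ] ℂ) (hB : ∀ v, (∀ w, B v w = 0) → v = 0)
    (hs : ∀ v w, B v w = B w v) (H : Submodule ℂ V)
    (h : finrank ℂ ↥(H ⊓ bperp B H) < finrank ℂ H ∨
      finrank ℂ ↥(H ⊓ bperp B H) + finrank ℂ H < finrank ℂ V) :
    ∃ s : V ≃ₗ[ℂ] V, (∀ x y, B (s x) (s y) = B x y) ∧
      LinearMap.det (s : V →ₗ[ℂ] V) = -1 ∧ ∀ x ∈ H, s x ∈ H := by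
  have hrefl : LinearMap.BilinForm.IsRefl B := fun x y hxy => by rw [hs, hxy]
  have hnd : LinearMap.BilinForm.Nondegenerate B := .ofSeparatingLeft hB
  have hperp : ∀ K : Submodule ℂ V, bperp B K = LinearMap.BilinForm.orthogonal B K := by
    intro K
    ext x
    exact forall₂_congr fun w _ => by rw [hs x w]
  have hcases : (¬ ∀ x ∈ H, ∀ y ∈ H, B x y = 0) ∨
      ¬ ∀ x ∈ bperp B H, ∀ y ∈ bperp B H, B x y = 0 := by
    rcases h with h | h
    · left
      rw [isotropic_iff_finrank_radical]
      omega
    · right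
      intro hiso
      have hle : bperp B H ≤ H := by
        have h1 : bperp B H ≤ bperp B (bperp B H) := hiso
        rwa [hperp (bperp B H), hperp H,
          LinearMap.BilinForm.orthogonal_orthogonal hnd hrefl, ← hperp H] at h1
      have h2 := LinearMap.BilinForm.finrank_orthogonal hnd H
      rw [← hperp, ← inf_eq_right.mpr hle] at h2
      omega
  rcases hcases with hc | hc
  · obtain ⟨u, hu, hu1⟩ := exists_unit_of_not_isotropic B hs _ hc
    obtain ⟨s, hs1, hs2, hs3⟩ := exists_reflection B hs u (by simp [hu1])
    refine ⟨s, hs1, hs2, fun x hx => ?_⟩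
    rw [hs3]
    exact H.sub_mem hx (H.smul_mem _ hu)
  · obtain ⟨u, hu, hu1⟩ := exists_unit_of_not_isotropic B hs _ hc
    obtain ⟨s, hs1, hs2, hs3⟩ := exists_reflection B hs u (by simp [hu1])
    refine ⟨s, hs1, hs2, fun x hx => ?_⟩
    rw [hs3, hs x u, hu x hx]
    simpa using hx

/-- Lemma 3.2 (`lem:v4-orbit`), second part: under the additional assumption that the form
is skew-symmetric, or symmetric with `r > 0` or `n - 2k + r > 0`, the isometry carrying `H`
to `H'` can be chosen to have determinant `1`. -/
theorem stmt_2 {V : Type*} [AddCommGroup V] [Module ℂ V] [FiniteDimensional ℂ V]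
    (n : ℕ) (hn : finrank ℂ V = n)
    (B : V →ₗ[ℂ] V →ₗ[ℂ] ℂ)
    (hB : ∀ v, (∀ w, B v w = 0) → v = 0)
    (H H' : Submodule ℂ V) (k r : ℕ)
    (hk : finrank ℂ H = k) (hk' : finrank ℂ H' = k)
    (hrad : (finrank ℂ ↥(H ⊓ bperp B H) : ℤ) = (k : ℤ) - r)
    (hrad' : (finrank ℂ ↥(H' ⊓ bperp B H') : ℤ) = (k : ℤ) - r)
    (hcase : (∀ v w, B v w = - B w v) ∨
      ((∀ v w, B v w = B w v) ∧ (0 < r ∨ 0 < (n : ℤ) - 2 * k + r))) :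
    ∃ g : V ≃ₗ[ℂ] V, (∀ v w, B (g v) (g w) = B v w) ∧
      LinearMap.det (g : V →ₗ[ℂ] V) = 1 ∧
      Submodule.map (g : V →ₗ[ℂ] V) H = H' := by
  have hk'' : finrank ℂ H = finrank ℂ H' := hk.trans hk'.symm
  have hR : finrank ℂ ↥(H ⊓ bperp B H) = finrank ℂ ↥(H' ⊓ bperp B H') := by
    exact_mod_cast hrad.trans hrad'.symm
  have hmap : ∀ g : V ≃ₗ[ℂ] V, (∀ x ∈ H, g x ∈ H') →
      Submodule.map (g : V →ₗ[ℂ] V) H = H' := fun g hg =>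
    Submodule.eq_of_le_of_finrank_eq (Submodule.map_le_iff_le_comap.mpr hg)
      ((LinearEquiv.finrank_map_eq g H).trans hk'')
  rcases hcase with hs | ⟨hs, hr⟩
  · have hε : ∀ v w, B v w = -1 * B w v := by simpa using hs
    obtain ⟨g, hg, hgH⟩ := witt_radical (-1) (Or.inr rfl) n V V B B hB hB hε hε H H' hn hn hk'' hR
    exact ⟨g, hg, det_isometry_of_skew B hB hs _ g hg le_rfl, hmap g hgH⟩
  · have hε : ∀ v w, B v w = 1 * B w v := by simpa using hs
    obtain ⟨g, hg, hgH⟩ := witt_radical 1 (Or.inl rfl) n V V B B hB hB hε hε H H' hn hn hk'' hR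
    rcases mul_self_eq_one_iff.mp (det_isometry_sq B hB g hg) with hdet | hdet
    · exact ⟨g, hg, hdet, hmap g hgH⟩
    · obtain ⟨s, hs1, hs2, hs3⟩ := exists_det_neg_one_stabilizer B hB hs H (by omega)
      refine ⟨s.trans g, fun v w => ?_, ?_, hmap _ fun x hx => hgH _ (hs3 x hx)⟩
      · rw [LinearEquiv.trans_apply, LinearEquiv.trans_apply, hg, hs1]
      · rw [LinearEquiv.coe_trans, LinearMap.det_comp, hdet, hs2]
        norm_num
end

section
/- Assume the form ⟨−,−⟩ is skew-symmetric (and nondegenerate). Let 0 ≤ k ≤ n and let r be an integer. Then there exists a subspace H ⊆ V with dim H = k and dim H − dim(H ∩ H^⊥) = r if and only if r is even and max{0, 2k − n} ≤ r ≤ k. -/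
/-!
Everything rests on splitting off hyperbolic planes. If the form is nondegenerate on a nonzero
subspace `U`, then `U` is the orthogonal direct sum of a plane spanned by `u, v` with `⟨u, v⟩ = 1`
and a subspace `U'` on which the form is again nondegenerate (`NondegOn.split`). By induction such
a `U` has even dimension.

For a subspace `H` with radical `H ∩ H^⊥`, a complement of the radical in `H` is nondegenerate of
dimension `r`, so `r` is even; the lower bound `2k - n ≤ r` is `dim (H ∩ H^⊥) ≤ dim H^⊥ = n - k`.

Conversely, `H` is built by induction on `dim U`: as long as `r > 0`, the whole plane `⟨u, v⟩` is
put into `H`, lowering `(n, k, r)` by `(2, 2, 2)`; once `r = 0`, only the line `⟨u⟩` is put into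
`H`, lowering `(n, k)` by `(2, 1)`. The radical of an orthogonal direct sum is the sum of the
radicals (`finrank_rad_sup`), which keeps track of `r`.
-/

open Module

section Symplectic

variable {V : Type*} [AddCommGroup V] [Module ℂ V]

/-- The restriction of `B` to the subspace `U` is (left) nondegenerate. -/
def NondegOn (B : V →ₗ[ℂ] V →ₗ[ℂ] ℂ) (U : Submodule ℂ V) : Prop :=
  ∀ x ∈ U, (∀ y ∈ U, B x y = 0) → x = 0

theorem skew_self {B : V →ₗ[ℂ] V →ₗ[ℂ] ℂ} (halt : ∀ v w, B v w = - B w v) (v : V) :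
    B v v = 0 := self_eq_neg.mp (halt v v)

theorem skew_zero {B : V →ₗ[ℂ] V →ₗ[ℂ] ℂ} (halt : ∀ v w, B v w = - B w v) {v w : V}
    (h : B v w = 0) : B w v = 0 := by
  rw [halt, h, neg_zero]

theorem rad_sup {B : V →ₗ[ℂ] V →ₗ[ℂ] ℂ} (halt : ∀ v w, B v w = - B w v)
    {A C : Submodule ℂ V} (hAC : ∀ a ∈ A, ∀ c ∈ C, B a c = 0) :
    (A ⊔ C) ⊓ bperp B (A ⊔ C) = (A ⊓ bperp B A) ⊔ (C ⊓ bperp B C) := by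
  apply le_antisymm
  · rintro x ⟨hx, hx'⟩
    obtain ⟨a, ha, c, hc, rfl⟩ := Submodule.mem_sup.mp hx
    refine Submodule.add_mem_sup ⟨ha, fun w hw => ?_⟩ ⟨hc, fun w hw => ?_⟩
    · have h := hx' w (Submodule.mem_sup_left hw)
      rwa [map_add, LinearMap.add_apply, skew_zero halt (hAC w hw c hc), add_zero] at h
    · have h := hx' w (Submodule.mem_sup_right hw)
      rwa [map_add, LinearMap.add_apply, hAC a ha w hw, zero_add] at h
  · refine sup_le ?_ ?_
    · rintro a ⟨ha, ha'⟩
      refine ⟨Submodule.mem_sup_left ha, fun w hw => ?_⟩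
      obtain ⟨a', h1, c', h2, rfl⟩ := Submodule.mem_sup.mp hw
      rw [map_add, ha' a' h1, hAC a ha c' h2, add_zero]
    · rintro c ⟨hc, hc'⟩
      refine ⟨Submodule.mem_sup_right hc, fun w hw => ?_⟩
      obtain ⟨a', h1, c', h2, rfl⟩ := Submodule.mem_sup.mp hw
      rw [map_add, hc' c' h2, skew_zero halt (hAC a' h1 c hc), add_zero]

theorem finrank_hyperbolic {B : V →ₗ[ℂ] V →ₗ[ℂ] ℂ} (halt : ∀ v w, B v w = - B w v)
    {u v : V} (huv : B u v = 1) : finrank ℂ (Submodule.span ℂ {u, v}) = 2 := by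
  have hli : LinearIndependent ℂ ![u, v] := by
    rw [LinearIndependent.pair_iff]
    intro s t h
    have h1 : B (s • u + t • v) v = 0 := by rw [h]; simp
    have h2 : B u (s • u + t • v) = 0 := by rw [h]; simp
    simp only [map_add, map_smul, LinearMap.add_apply, LinearMap.smul_apply, huv,
      skew_self halt, smul_eq_mul, mul_one, mul_zero, add_zero, zero_add] at h1 h2
    exact ⟨h1, h2⟩
  have hr : Set.range ![u, v] = {u, v} := Matrix.range_cons_cons_empty u v ![]
  rw [← hr, finrank_span_eq_card hli, Fintype.card_fin]

theorem nondegOn_hyperbolic {B : V →ₗ[ℂ] V →ₗ[ℂ] ℂ} (halt : ∀ v w, B v w = - B w v)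
    {u v : V} (huv : B u v = 1) : NondegOn B (Submodule.span ℂ {u, v}) := by
  intro x hx h
  have h1 := h u (Submodule.subset_span (by simp))
  have h2 := h v (Submodule.subset_span (by simp))
  obtain ⟨s, t, rfl⟩ := Submodule.mem_span_pair.mp hx
  have hvu : B v u = -1 := by rw [halt, huv]
  simp only [map_add, map_smul, LinearMap.add_apply, LinearMap.smul_apply, huv, hvu,
    skew_self halt, smul_eq_mul, mul_one, mul_zero, add_zero, zero_add, mul_neg,
    neg_eq_zero] at h1 h2
  simp [h1, h2]

theorem NondegOn.rad_eq_bot {B : V →ₗ[ℂ] V →ₗ[ℂ] ℂ} {U : Submodule ℂ V} (h : NondegOn B U) :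
    U ⊓ bperp B U = ⊥ :=
  (Submodule.eq_bot_iff _).mpr fun x hx => h x hx.1 hx.2

variable [FiniteDimensional ℂ V]

theorem finrank_sup_of_disjoint {A C : Submodule ℂ V} (h : A ⊓ C = ⊥) :
    finrank ℂ ↥(A ⊔ C) = finrank ℂ A + finrank ℂ C := by
  have := Submodule.finrank_sup_add_finrank_inf_eq A C
  rw [h, finrank_bot] at this
  omega

theorem finrank_rad_sup {B : V →ₗ[ℂ] V →ₗ[ℂ] ℂ} (halt : ∀ v w, B v w = - B w v)
    {A C : Submodule ℂ V} (hAC : ∀ a ∈ A, ∀ c ∈ C, B a c = 0) (hd : A ⊓ C = ⊥) :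
    finrank ℂ ↥((A ⊔ C) ⊓ bperp B (A ⊔ C)) =
      finrank ℂ ↥(A ⊓ bperp B A) + finrank ℂ ↥(C ⊓ bperp B C) := by
  rw [rad_sup halt hAC, finrank_sup_of_disjoint]
  exact le_bot_iff.mp (hd ▸ inf_le_inf inf_le_left inf_le_left)

/-- A nonzero nondegenerate subspace is the orthogonal direct sum of a hyperbolic plane
`span {u, v}` and a nondegenerate subspace `U'`. -/
theorem NondegOn.split {B : V →ₗ[ℂ] V →ₗ[ℂ] ℂ} (halt : ∀ v w, B v w = - B w v)
    {U : Submodule ℂ V} (hU : NondegOn B U) (h0 : U ≠ ⊥) :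
    ∃ (u v : V) (U' : Submodule ℂ V), u ∈ U ∧ v ∈ U ∧ B u v = 1 ∧ U' ≤ U ∧ NondegOn B U' ∧
      (∀ a ∈ U', ∀ c ∈ Submodule.span ℂ {u, v}, B a c = 0) ∧
      U' ⊓ Submodule.span ℂ {u, v} = ⊥ ∧ finrank ℂ U = finrank ℂ U' + 2 := by
  obtain ⟨u, hu, hu0⟩ := Submodule.exists_mem_ne_zero_of_ne_bot h0
  obtain ⟨w, hw, hw0⟩ : ∃ w ∈ U, B u w ≠ 0 := by
    by_contra! h
    exact hu0 (hU u hu h)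
  obtain ⟨v, hv, huv⟩ : ∃ v ∈ U, B u v = 1 :=
    ⟨(B u w)⁻¹ • w, U.smul_mem _ hw, by simp [hw0]⟩
  have hvu : B v u = -1 := by rw [halt, huv]
  set P := Submodule.span ℂ {u, v} with hP
  have huP : u ∈ P := Submodule.subset_span (by simp)
  have hvP : v ∈ P := Submodule.subset_span (by simp)
  have hPU : P ≤ U := Submodule.span_le.mpr (by rintro x (rfl | rfl) <;> assumption)
  have horth : ∀ a ∈ U ⊓ bperp B P, ∀ c ∈ P, B a c = 0 := fun a ha c hc => ha.2 c hc
  have hdisj : (U ⊓ bperp B P) ⊓ P = ⊥ := by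
    rw [← le_bot_iff, ← (nondegOn_hyperbolic halt huv).rad_eq_bot]
    exact fun x hx => ⟨hx.2, hx.1.2⟩
  have hsup : (U ⊓ bperp B P) ⊔ P = U := by
    refine le_antisymm (sup_le inf_le_left hPU) fun x hx => ?_
    -- the projection of `x` onto the plane is `⟨x, v⟩ u - ⟨x, u⟩ v`
    have hy : B x v • u - B x u • v ∈ P :=
      P.sub_mem (P.smul_mem _ huP) (P.smul_mem _ hvP)
    refine Submodule.mem_sup.mpr ⟨x - (B x v • u - B x u • v),
      ⟨U.sub_mem hx (hPU hy), fun c hc => ?_⟩, _, hy, sub_add_cancel _ _⟩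
    obtain ⟨s, t, rfl⟩ := Submodule.mem_span_pair.mp hc
    simp only [map_add, map_sub, map_smul, LinearMap.sub_apply, LinearMap.smul_apply, huv, hvu,
      skew_self halt, smul_eq_mul]
    ring
  refine ⟨u, v, U ⊓ bperp B P, hu, hv, huv, inf_le_left, ?_, horth, hdisj, ?_⟩
  · intro x hx h
    refine hU x hx.1 fun y hy => ?_
    rw [← hsup] at hy
    obtain ⟨a, ha, c, hc, rfl⟩ := Submodule.mem_sup.mp hy
    rw [map_add, h a ha, horth x hx c hc, add_zero]
  · conv_lhs => rw [← hsup]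
    rw [finrank_sup_of_disjoint hdisj, finrank_hyperbolic halt huv]

theorem NondegOn.even_finrank {B : V →ₗ[ℂ] V →ₗ[ℂ] ℂ} (halt : ∀ v w, B v w = - B w v)
    (d : ℕ) : ∀ U : Submodule ℂ V, finrank ℂ U = d → NondegOn B U → Even d := by
  induction d using Nat.strong_induction_on with
  | _ d ih =>
    intro U hd hU
    by_cases h0 : U = ⊥
    · subst h0
      rw [finrank_bot] at hd
      simp [← hd]
    · obtain ⟨u, v, U', -, -, -, -, hU', -, -, hf⟩ := hU.split halt h0
      rw [← hd, hf]
      exact (ih _ (by omega) U' rfl hU').add even_two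

/-- The rank `dim H - dim (H ∩ H^⊥)` of a skew form on `H` is even. -/
theorem exists_even_rank {B : V →ₗ[ℂ] V →ₗ[ℂ] ℂ} (halt : ∀ v w, B v w = - B w v)
    (H : Submodule ℂ V) :
    ∃ d, Even d ∧ finrank ℂ H = d + finrank ℂ ↥(H ⊓ bperp B H) := by
  obtain ⟨C, hC⟩ := Submodule.exists_isCompl (H ⊓ bperp B H)
  have hsup : (H ⊓ C) ⊔ (H ⊓ bperp B H) = H := by
    refine le_antisymm (sup_le inf_le_left inf_le_left) fun x hx => ?_
    obtain ⟨a, ha, c, hc, rfl⟩ := Submodule.mem_sup.mp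
      (hC.sup_eq_top ▸ Submodule.mem_top : x ∈ (H ⊓ bperp B H) ⊔ C)
    refine Submodule.mem_sup.mpr ⟨c, ⟨?_, hc⟩, a, ha, add_comm _ _⟩
    exact (H.add_mem_iff_right ha.1).mp hx
  have hdisj : (H ⊓ C) ⊓ (H ⊓ bperp B H) = ⊥ := by
    rw [← le_bot_iff, ← hC.inf_eq_bot]
    exact fun x hx => ⟨hx.2, hx.1.2⟩
  refine ⟨finrank ℂ ↥(H ⊓ C), NondegOn.even_finrank halt _ _ rfl ?_, ?_⟩
  · intro x hx h
    -- `x` is orthogonal to `H ∩ C` by assumption and to the radical by skew-symmetry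
    have hxr : x ∈ H ⊓ bperp B H := by
      refine ⟨hx.1, fun y hy => ?_⟩
      rw [← hsup] at hy
      obtain ⟨a, ha, c, hc, rfl⟩ := Submodule.mem_sup.mp hy
      rw [map_add, h a ha, skew_zero halt (hc.2 x hx.1), add_zero]
    exact (Submodule.mem_bot ℂ).mp (hdisj ▸ (⟨hx, hxr⟩ : x ∈ (H ⊓ C) ⊓ (H ⊓ bperp B H)))
  · rw [← finrank_sup_of_disjoint hdisj, hsup]

/-- Inside a nondegenerate `U` there is a subspace of dimension `k` and rank `2 * s`, provided
`2 * s ≤ k` and `2 * k - dim U ≤ 2 * s`. -/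
theorem NondegOn.exists_subspace {B : V →ₗ[ℂ] V →ₗ[ℂ] ℂ} (halt : ∀ v w, B v w = - B w v)
    (d : ℕ) : ∀ (U : Submodule ℂ V) (k s : ℕ), finrank ℂ U = d → NondegOn B U →
      2 * s ≤ k → 2 * k ≤ d + 2 * s →
      ∃ H ≤ U, finrank ℂ H = k ∧ finrank ℂ ↥(H ⊓ bperp B H) + 2 * s = k := by
  induction d using Nat.strong_induction_on with
  | _ d ih =>
    intro U k s hd hU hsk hkd
    obtain rfl | hk := Nat.eq_zero_or_pos k
    · refine ⟨⊥, bot_le, finrank_bot _ _, ?_⟩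
      rw [bot_inf_eq, finrank_bot]
      omega
    have h0 : U ≠ ⊥ := by
      rintro rfl
      rw [finrank_bot] at hd
      omega
    obtain ⟨u, v, U', hu, hv, huv, hU'U, hU', horth, hdisj, hf⟩ := hU.split halt h0
    obtain rfl | hs := Nat.eq_zero_or_pos s
    · obtain ⟨H, hH, hHk, hHr⟩ :=
        ih (finrank ℂ U') (by omega) U' (k - 1) 0 rfl hU' (by omega) (by omega)
      have hle : Submodule.span ℂ {u} ≤ Submodule.span ℂ {u, v} :=
        Submodule.span_mono (by simp)
      have hd' : H ⊓ Submodule.span ℂ {u} = ⊥ :=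
        le_bot_iff.mp (hdisj ▸ inf_le_inf hH hle)
      have hu0 : u ≠ 0 := by
        rintro rfl
        simp at huv
      have hrad : Submodule.span ℂ {u} ⊓ bperp B (Submodule.span ℂ {u}) =
          Submodule.span ℂ {u} := by
        refine inf_eq_left.mpr fun x hx y hy => ?_
        obtain ⟨a, rfl⟩ := Submodule.mem_span_singleton.mp hx
        obtain ⟨b, rfl⟩ := Submodule.mem_span_singleton.mp hy
        simp [skew_self halt]
      refine ⟨H ⊔ Submodule.span ℂ {u}, sup_le (hH.trans hU'U) ?_, ?_, ?_⟩
      · simpa using hu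
      · rw [finrank_sup_of_disjoint hd', finrank_span_singleton hu0]
        omega
      · rw [finrank_rad_sup halt (fun a ha c hc => horth a (hH ha) c (hle hc)) hd', hrad,
          finrank_span_singleton hu0]
        omega
    · obtain ⟨H, hH, hHk, hHr⟩ :=
        ih (finrank ℂ U') (by omega) U' (k - 2) (s - 1) rfl hU' (by omega) (by omega)
      have hd' : H ⊓ Submodule.span ℂ {u, v} = ⊥ :=
        le_bot_iff.mp (hdisj ▸ inf_le_inf_right _ hH)
      refine ⟨H ⊔ Submodule.span ℂ {u, v}, sup_le (hH.trans hU'U) ?_, ?_, ?_⟩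
      · exact Submodule.span_le.mpr (by rintro x (rfl | rfl) <;> assumption)
      · rw [finrank_sup_of_disjoint hd', finrank_hyperbolic halt huv]
        omega
      · rw [finrank_rad_sup halt (fun a ha c hc => horth a (hH ha) c hc) hd',
          (nondegOn_hyperbolic halt huv).rad_eq_bot, finrank_bot]
        omega

theorem finrank_bperp {B : V →ₗ[ℂ] V →ₗ[ℂ] ℂ} (hB : ∀ v, (∀ w, B v w = 0) → v = 0)
    (halt : ∀ v w, B v w = - B w v) (H : Submodule ℂ V) :
    finrank ℂ H + finrank ℂ (bperp B H) = finrank ℂ V := by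
  have hnd : LinearMap.BilinForm.Nondegenerate B :=
    ⟨hB, fun y hy => hB y fun w => skew_zero halt (hy w)⟩
  have heq : bperp B H = LinearMap.BilinForm.orthogonal B H := by
    ext x
    exact ⟨fun h w hw => skew_zero halt (h w hw), fun h w hw => skew_zero halt (h w hw)⟩
  have h := LinearMap.BilinForm.finrank_orthogonal hnd H
  have := Submodule.finrank_le H
  rw [heq, h]
  omega

end Symplectic

/-- Proposition 3.7(1) (`prop:orbit-symp`): for a nondegenerate skew-symmetric form on an
`n`-dimensional space and `0 ≤ k ≤ n`, a subspace `H` with `dim H = k` and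
`dim H - dim (H ∩ H^⊥) = r` exists if and only if `r` is even and
`max {0, 2k - n} ≤ r ≤ k`. -/
theorem stmt_3 {V : Type*} [AddCommGroup V] [Module ℂ V] [FiniteDimensional ℂ V]
    (n : ℕ) (hn : finrank ℂ V = n)
    (B : V →ₗ[ℂ] V →ₗ[ℂ] ℂ)
    (hB : ∀ v, (∀ w, B v w = 0) → v = 0)
    (halt : ∀ v w, B v w = - B w v)
    (k : ℕ) (hkn : k ≤ n) (r : ℤ) :
    (∃ H : Submodule ℂ V, finrank ℂ H = k ∧
        (finrank ℂ H : ℤ) - (finrank ℂ ↥(H ⊓ bperp B H) : ℤ) = r) ↔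
      (Even r ∧ max 0 (2 * (k : ℤ) - n) ≤ r ∧ r ≤ k) := by
  constructor
  · rintro ⟨H, hk, hr⟩
    obtain ⟨d, ⟨e, he⟩, hd⟩ := exists_even_rank halt H
    have h1 := finrank_bperp hB halt H
    have h2 : finrank ℂ ↥(H ⊓ bperp B H) ≤ finrank ℂ (bperp B H) :=
      Submodule.finrank_mono inf_le_right
    refine ⟨⟨e, by omega⟩, max_le (by omega) (by omega), by omega⟩
  · rintro ⟨⟨e, he⟩, hmax, hrk⟩
    obtain ⟨h0, h1⟩ := max_le_iff.mp hmax
    obtain ⟨s, rfl⟩ := Int.eq_ofNat_of_zero_le (show 0 ≤ e by omega)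
    obtain ⟨H, -, hk, hr⟩ := NondegOn.exists_subspace halt n (⊤ : Submodule ℂ V) k s
      (by rw [finrank_top, hn]) (fun x _ h => hB x fun w => h w Submodule.mem_top)
      (by omega) (by omega)
    exact ⟨H, hk, by omega⟩
end

section
/- Assume the form ⟨−,−⟩ is skew-symmetric (and nondegenerate), and let H ⊆ V be any subspace. Then the stabilizer of H in the symplectic group, namely the set S = {g ∈ End(V) : g is an isometry of V and g(H) = H}, is a connected subset of End(V). -/
/-!
The set in question is the group `symplStab B H` of isometries preserving `H`, and each of its
elements `g` is joined to `1` by a path in it.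

If `-1` is not an eigenvalue of `g`, the Cayley path
`t ↦ ((1 + t) g + (1 - t)) ((1 - t) g + (1 + t))⁻¹` consists of isometries preserving `H`, and
joins `1` (at `t = 0`) to `g` (at `t = 1`). It is defined for complex `t` off a finite set, whose
complement in `ℂ` is path connected (`joinedIn_of_ker_eq_zero`).

In general let `ε` be `-1` on the generalized `-1`-eigenspace of `g` and `1` on the sum of the
other generalized eigenspaces. These two spaces are orthogonal and `ε` is a polynomial in `g`, so
`ε` lies in the group; and `g ε` does not have the eigenvalue `-1`. As `g = (g ε) ε`, it remains to
join the involution `ε` to `1`. Its `-1`-eigenspace contains a hyperbolic pair `e, f` compatible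
with `H` (`exists_hyperbolic_pair`). Scaling `e` by `s` and `f` by `s⁻¹`, with `s` going from `1`
to `-1` in `ℂ \ {0}`, shows that `ε` may be modified to be `1` on the span of `e, f`, and
induction on the dimension of the `-1`-eigenspace concludes (`joinedIn_involution`).
-/

open Module Polynomial

section Stab

variable {V : Type*} [NormedAddCommGroup V] [NormedSpace ℂ V]

/-- The isometries of `B` mapping `H` into itself. For nondegenerate `B` on a finite-dimensional
space these are automatically bijective and map `H` onto itself. -/
def symplStab (B : V →ₗ[ℂ] V →ₗ[ℂ] ℂ) (H : Submodule ℂ V) : Set (V →L[ℂ] V) :=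
  {g | (∀ v w, B (g v) (g w) = B v w) ∧ ∀ v ∈ H, g v ∈ H}

variable {B : V →ₗ[ℂ] V →ₗ[ℂ] ℂ} {H : Submodule ℂ V}

lemma one_mem_symplStab : (1 : V →L[ℂ] V) ∈ symplStab B H := by
  constructor <;> simp

lemma mul_mem_symplStab {g h : V →L[ℂ] V} (hg : g ∈ symplStab B H) (hh : h ∈ symplStab B H) :
    g * h ∈ symplStab B H :=
  ⟨fun v w => by simp [hg.1, hh.1], fun v hv => hg.2 _ (hh.2 _ hv)⟩

lemma injective_of_isometry (hB : ∀ v, (∀ w, B v w = 0) → v = 0) {g : V →L[ℂ] V}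
    (hg : ∀ v w, B (g v) (g w) = B v w) : Function.Injective g := by
  rw [injective_iff_map_eq_zero]
  intro v hv
  apply hB
  intro w
  rw [← hg, hv]
  simp

lemma map_eq_of_injective [FiniteDimensional ℂ V] {g : V →L[ℂ] V} (hg : Function.Injective g)
    (hH : ∀ v ∈ H, g v ∈ H) : H.map (g : V →ₗ[ℂ] V) = H := by
  apply Submodule.eq_of_le_of_finrank_eq
  · rintro _ ⟨x, hx, rfl⟩
    exact hH x hx
  · exact (Submodule.equivMapOfInjective (g : V →ₗ[ℂ] V) hg H).finrank_eq.symm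

/-- Elements joined to `1` inside the stabilizer are closed under multiplication. -/
lemma joinedIn_one_mul {g h : V →L[ℂ] V} (hg : JoinedIn (symplStab B H) 1 g)
    (hh : JoinedIn (symplStab B H) 1 h) : JoinedIn (symplStab B H) 1 (g * h) := by
  refine hg.trans ?_
  obtain ⟨γ, hγ⟩ := hh
  refine ⟨(γ.map (f := fun x => g * x) (by fun_prop)).cast (by simp) (by simp), fun t => ?_⟩
  exact mul_mem_symplStab hg.target_mem (hγ t)

/-- A family in `S` parametrized continuously by the complement of a countable subset of `ℂ`
joins any two of its members, because such a complement is path connected. -/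
lemma joinedIn_of_countable_compl {X : Type*} [TopologicalSpace X] {S : Set X} {T : Set ℂ}
    (hT : T.Countable) {f : ℂ → X} (hf : ContinuousOn f Tᶜ) (hS : ∀ t ∈ Tᶜ, f t ∈ S)
    {a b : ℂ} (ha : a ∈ Tᶜ) (hb : b ∈ Tᶜ) : JoinedIn S (f a) (f b) := by
  have h1 : IsPathConnected (Tᶜ : Set ℂ) :=
    hT.isPathConnected_compl_of_one_lt_rank (by simp [Complex.rank_real_complex])
  have h2 := (h1.image' hf).joinedIn _ ⟨a, ha, rfl⟩ _ ⟨b, hb, rfl⟩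
  exact h2.mono (by rintro _ ⟨t, ht, rfl⟩; exact hS t ht)

/-! ### Hyperbolic planes and involutions -/

/-- For a hyperbolic pair `e, f`, the map acting as `s` on `e`, as `s⁻¹` on `f`, and as the
identity on the orthogonal complement of the plane they span. -/
noncomputable def hypScale [FiniteDimensional ℂ V] (B : V →ₗ[ℂ] V →ₗ[ℂ] ℂ) (e f : V) (s : ℂ) :
    V →L[ℂ] V :=
  1 + (s - 1) • LinearMap.toContinuousLinearMap ((B.flip f).smulRight e)
    + (s⁻¹ - 1) • LinearMap.toContinuousLinearMap ((B e).smulRight f)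

lemma hypScale_apply [FiniteDimensional ℂ V] (e f : V) (s : ℂ) (v : V) :
    hypScale B e f s v = v + (s - 1) • B v f • e + (s⁻¹ - 1) • B e v • f := by
  simp [hypScale]

lemma hypScale_mem [FiniteDimensional ℂ V] (halt : ∀ v w, B v w = - B w v) {e f : V}
    (hef : B e f = 1) (hHe : ∀ v ∈ H, B v f • e ∈ H) (hHf : ∀ v ∈ H, B e v • f ∈ H)
    {s : ℂ} (hs : s ≠ 0) : hypScale B e f s ∈ symplStab B H := by
  have self : ∀ v, B v v = 0 := fun v => by
    have := halt v v
    linear_combination this / 2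
  refine ⟨fun v w => ?_, fun v hv => ?_⟩
  · simp only [hypScale_apply, map_add, map_smul, LinearMap.add_apply, LinearMap.smul_apply,
      smul_eq_mul, self, hef, halt f e, halt v e, halt f w]
    field_simp
    ring
  · rw [hypScale_apply]
    exact H.add_mem (H.add_mem hv (H.smul_mem _ (hHe v hv))) (H.smul_mem _ (hHf v hv))

/-- The map that is `-1` on a hyperbolic plane and `1` on its complement is joined to `1` by
moving the scaling parameter from `1` to `-1` inside `ℂ \ {0}`. -/
lemma joinedIn_hypScale [FiniteDimensional ℂ V] (halt : ∀ v w, B v w = - B w v) {e f : V}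
    (hef : B e f = 1) (hHe : ∀ v ∈ H, B v f • e ∈ H) (hHf : ∀ v ∈ H, B e v • f ∈ H) :
    JoinedIn (symplStab B H) 1 (hypScale B e f (-1)) := by
  have h := joinedIn_of_countable_compl (S := symplStab B H) (T := {0}) (f := hypScale B e f)
    (Set.countable_singleton 0) ?_ (fun t ht => hypScale_mem halt hef hHe hHf ht)
    (a := 1) (b := -1) (by simp) (by simp)
  · simpa [hypScale] using h
  · unfold hypScale
    have : ContinuousOn (fun s : ℂ => s⁻¹) {0}ᶜ := continuousOn_inv₀
    fun_prop

/-- The `-1`-eigenspace of an involution `ε ≠ 1` in the stabilizer contains a hyperbolic pair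
both of whose coordinate projections preserve `H`. -/
lemma exists_hyperbolic_pair (hB : ∀ v, (∀ w, B v w = 0) → v = 0)
    (halt : ∀ v w, B v w = - B w v) {ε : V →L[ℂ] V} (hε : ε ∈ symplStab B H)
    (hinv : ∀ v, ε (ε v) = v) (hne : ε ≠ 1) :
    ∃ e f, ε e = -e ∧ ε f = -f ∧ B e f = 1 ∧ (∀ v ∈ H, B v f • e ∈ H) ∧
      ∀ v ∈ H, B e v • f ∈ H := by
  have anti : ∀ v, ε (v - ε v) = -(v - ε v) := fun v => by simp [hinv]
  have antiH : ∀ v ∈ H, v - ε v ∈ H := fun v hv => H.sub_mem hv (hε.2 v hv)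
  have pair : ∀ e v, ε e = -e → B e (v - ε v) = 2 * B e v := fun e v he => by
    have := hε.1 e v
    rw [he] at this
    simp only [map_neg, LinearMap.neg_apply] at this
    rw [map_sub]
    linear_combination this
  have partner : ∀ e, e ≠ 0 → ε e = -e → ∃ f, ε f = -f ∧ B e f = 1 := by
    intro e he0 he
    obtain ⟨w, hw⟩ : ∃ w, B e w ≠ 0 := by
      by_contra! h
      exact he0 (hB e h)
    refine ⟨(2 * B e w)⁻¹ • (w - ε w), ?_, ?_⟩
    · rw [map_smul, anti, smul_neg]
    · rw [map_smul, pair e w he, smul_eq_mul, inv_mul_cancel₀ (by simpa using hw)]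
  by_cases h1 : ∃ e ∈ H, ∃ f ∈ H, ε e = -e ∧ ε f = -f ∧ B e f ≠ 0
  · obtain ⟨e, heH, f, hfH, he, hf, hef⟩ := h1
    refine ⟨e, (B e f)⁻¹ • f, he, by rw [map_smul, hf, smul_neg], by simp [hef],
      fun v hv => H.smul_mem _ heH, fun v hv => H.smul_mem _ (H.smul_mem _ hfH)⟩
  push Not at h1
  by_cases h2 : ∃ e ∈ H, e ≠ 0 ∧ ε e = -e
  · obtain ⟨e, heH, he0, he⟩ := h2
    obtain ⟨f, hf, hef⟩ := partner e he0 he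
    refine ⟨e, f, he, hf, hef, fun v hv => H.smul_mem _ heH, fun v hv => ?_⟩
    have h3 := h1 e heH _ (antiH v hv) he (anti v)
    rw [pair e v he] at h3
    have h4 : B e v = 0 := by simpa using h3
    simp [h4]
  · push Not at h2
    obtain ⟨v, hv⟩ : ∃ v, v - ε v ≠ 0 := by
      by_contra! h
      exact hne (ContinuousLinearMap.ext fun v => (sub_eq_zero.1 (h v)).symm)
    obtain ⟨f, hf, hef⟩ := partner _ hv (anti v)
    -- `H` lies in the fixed space of `ε`, hence is orthogonal to the `-1`-eigenspace.
    have orth : ∀ u, ε u = -u → ∀ v ∈ H, B u v = 0 := by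
      intro u hu v hv
      have h3 : v - ε v = 0 := by
        by_contra h
        exact h2 _ (antiH v hv) h (anti v)
      have h4 := pair u v hu
      rw [h3] at h4
      simpa using h4.symm
    refine ⟨v - ε v, f, anti v, hf, hef, fun u hu => ?_, fun u hu => ?_⟩
    · simp [halt u f, orth f hf u hu]
    · rw [orth _ (anti v) u hu, zero_smul]
      exact H.zero_mem

/-- Splitting off hyperbolic planes from the `-1`-eigenspace, by induction on its dimension. -/
lemma joinedIn_involution [FiniteDimensional ℂ V] (hB : ∀ v, (∀ w, B v w = 0) → v = 0)
    (halt : ∀ v w, B v w = - B w v) (n : ℕ) : ∀ ε ∈ symplStab B H, (∀ v, ε (ε v) = v) →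
      finrank ℂ (LinearMap.ker ((ε + 1 : V →L[ℂ] V) : V →ₗ[ℂ] V)) = n →
      JoinedIn (symplStab B H) 1 ε := by
  induction n using Nat.strong_induction_on with
  | _ n ih =>
  intro ε hε hinv hn
  by_cases hne : ε = 1
  · subst hne
    exact JoinedIn.refl one_mem_symplStab
  obtain ⟨e, f, he, hf, hef, hHe, hHf⟩ := exists_hyperbolic_pair hB halt hε hinv hne
  have self : ∀ v, B v v = 0 := fun v => by
    have := halt v v
    linear_combination this / 2
  have hfe : B f e = -1 := by rw [halt, hef]
  have hj := joinedIn_hypScale halt hef hHe hHf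
  set r := hypScale B e f (-1) with hr
  have hra : ∀ v, r v = v - (2 : ℂ) • B v f • e - (2 : ℂ) • B e v • f := fun v => by
    rw [hr, hypScale_apply]
    norm_num
    module
  have hrr : ∀ v, r (r v) = v := fun v => by
    rw [hra (r v), hra v]
    simp only [map_sub, map_smul, LinearMap.sub_apply, LinearMap.smul_apply, smul_eq_mul, self,
      hef]
    module
  have hεf : ∀ v, B (ε v) f = - B v f := fun v => by
    have := hε.1 v f
    rw [hf] at this
    simp only [map_neg] at this
    linear_combination -this
  have hεe : ∀ v, B e (ε v) = - B e v := fun v => by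
    have := hε.1 e v
    rw [he] at this
    simp only [map_neg, LinearMap.neg_apply] at this
    linear_combination -this
  have hεr : ∀ v, ε (r v) = ε v + (2 : ℂ) • B v f • e + (2 : ℂ) • B e v • f := fun v => by
    rw [hra]
    simp only [map_sub, map_smul, he, hf]
    module
  have hcomm : ∀ v, r (ε v) = ε (r v) := fun v => by
    rw [hra, hεr, hεf, hεe]
    module
  have hmem : ε * r ∈ symplStab B H := mul_mem_symplStab hε hj.target_mem
  have hlt : LinearMap.ker ((ε * r + 1 : V →L[ℂ] V) : V →ₗ[ℂ] V) <
      LinearMap.ker ((ε + 1 : V →L[ℂ] V) : V →ₗ[ℂ] V) := by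
    refine lt_of_le_of_ne (fun v hv => ?_) (fun h => ?_)
    · have hv' : ε (r v) + v = 0 := by simpa using hv
      have h1 : B v f = 0 := by
        have := congrArg (fun x => B x f) hv'
        simp only [hεr, map_add, map_smul, LinearMap.add_apply, LinearMap.smul_apply, smul_eq_mul,
          self, hef, hεf, map_zero, LinearMap.zero_apply] at this
        linear_combination this / 2
      have h2 : B e v = 0 := by
        have := congrArg (fun x => B e x) hv'
        simp only [hεr, map_add, map_smul, smul_eq_mul,
          self, hef, hεe, map_zero] at this
        linear_combination this / 2
      rw [hεr, h1, h2] at hv'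
      simpa using hv'
    · have h1 : e ∈ LinearMap.ker ((ε + 1 : V →L[ℂ] V) : V →ₗ[ℂ] V) := by simp [he]
      rw [← h] at h1
      have h2 : ε (r e) + e = 0 := by simpa using h1
      rw [hεr, he, hef, self] at h2
      have h3 : e = 0 := by
        have : (2 : ℂ) • e = 0 := by rw [← h2]; module
        simpa using this
      rw [h3] at hef
      simp at hef
  have hfin := Submodule.finrank_lt_finrank_of_lt hlt
  have key := ih _ (hn ▸ hfin) (ε * r) hmem
    (fun v => by simp [hcomm, hrr, hinv]) rfl
  have : ε = (ε * r) * r := by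
    ext v
    simp [hrr]
  rw [this]
  exact joinedIn_one_mul key hj

/-! ### The Cayley path -/

/-- The Cayley path `t ↦ ((1 + t) g + (1 - t)) ((1 - t) g + (1 + t))⁻¹` goes from `1` at `t = 0`
to `g` at `t = 1`, and is defined off a finite set of `t`, which avoids `0` when `-1` is not an
eigenvalue of `g`. -/
lemma joinedIn_of_ker_eq_zero [FiniteDimensional ℂ V] {g : V →L[ℂ] V} (hg : g ∈ symplStab B H)
    (hker : ∀ v, g v = -v → v = 0) : JoinedIn (symplStab B H) 1 g := by
  have : CompleteSpace V := FiniteDimensional.complete ℂ V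
  let D : ℂ → V →L[ℂ] V := fun t => (1 - t) • g + (1 + t) • 1
  have hDa : ∀ t v, D t v = (1 - t) • g v + (1 + t) • v := fun t v => by simp [D]
  have hunit : ∀ t, (∀ v, D t v = 0 → v = 0) → IsUnit (D t) := by
    intro t ht
    have h1 : IsUnit ((D t : V →L[ℂ] V) : Module.End ℂ V) := by
      rw [LinearMap.isUnit_iff_ker_eq_bot, LinearMap.ker_eq_bot']
      exact ht
    exact h1.map (Module.End.toContinuousLinearMap V)
  let T : Set ℂ := {t | ¬ IsUnit (D t)}
  have hT : T.Countable := by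
    have hfin : (spectrum ℂ ((g : V →L[ℂ] V) : Module.End ℂ V)).Finite :=
      Module.End.finite_spectrum _
    refine ((hfin.image fun μ => (μ + 1) / (μ - 1)).subset ?_).countable
    intro t ht
    have h1 : ∃ v, D t v = 0 ∧ v ≠ 0 := by
      by_contra! h
      exact ht (hunit t h)
    obtain ⟨v, hv, hv0⟩ := h1
    rw [hDa] at hv
    have ht1 : 1 - t ≠ 0 := by
      intro h
      have : t = 1 := by linear_combination -h
      subst this
      have h2 : (1 + 1 : ℂ) • v = 0 := by simpa using hv
      norm_num at h2
      exact hv0 h2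
    refine ⟨-(1 + t) / (1 - t), ?_, ?_⟩
    · apply Module.End.HasEigenvalue.mem_spectrum
      refine Module.End.hasEigenvalue_of_hasEigenvector (x := v)
        (Module.End.hasEigenvector_iff.2 ⟨Module.End.mem_eigenspace_iff.2 ?_, hv0⟩)
      have h3 : (1 - t) • g v = -(1 + t) • v := by
        rw [neg_smul]; exact eq_neg_of_add_eq_zero_left hv
      rw [div_eq_inv_mul, mul_smul, ← h3, smul_smul, inv_mul_cancel₀ ht1, one_smul]
      rfl
    · have h4 : -(1 + t) / (1 - t) - 1 = -2 / (1 - t) := by field_simp; ring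
      have h5 : -(1 + t) / (1 - t) + 1 = -2 * t / (1 - t) := by field_simp; ring
      simp only [h4, h5]
      field_simp
  let F : ℂ → V →L[ℂ] V := fun t => D (-t) * Ring.inverse (D t)
  have hDcont : Continuous D := by fun_prop
  have hF : ContinuousOn F Tᶜ := by
    intro t ht
    have htu : IsUnit (D t) := by simpa [T] using ht
    apply ContinuousAt.continuousWithinAt
    obtain ⟨u, hu⟩ := htu
    have h1 : ContinuousAt Ring.inverse (D t) := hu ▸ NormedRing.inverse_continuousAt u
    have h2 : ContinuousAt (fun t => Ring.inverse (D t)) t :=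
      ContinuousAt.comp (f := D) h1 hDcont.continuousAt
    exact (hDcont.comp continuous_neg).continuousAt.mul h2
  have hD0 : (0 : ℂ) ∈ Tᶜ := by
    simp only [T, Set.mem_compl_iff, Set.mem_ofPred_eq, not_not]
    apply hunit
    intro v hv
    rw [hDa] at hv
    exact hker v (eq_neg_of_add_eq_zero_left (by simpa using hv))
  have hD1 : (1 : ℂ) ∈ Tᶜ := by
    simp only [T, Set.mem_compl_iff, Set.mem_ofPred_eq, not_not]
    apply hunit
    intro v hv
    rw [hDa] at hv
    norm_num at hv
    exact hv
  have hS : ∀ t ∈ Tᶜ, F t ∈ symplStab B H := by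
    intro t ht
    have htu : IsUnit (D t) := by simpa [T] using ht
    have hr : ∀ v, D t (Ring.inverse (D t) v) = v := fun v => by
      have := Ring.mul_inverse_cancel _ htu
      exact congrArg (fun x : V →L[ℂ] V => x v) this
    have hl : ∀ v, Ring.inverse (D t) (D t v) = v := fun v => by
      have := Ring.inverse_mul_cancel _ htu
      exact congrArg (fun x : V →L[ℂ] V => x v) this
    have hDH : ∀ s, ∀ v ∈ H, D s v ∈ H := fun s v hv => by
      rw [hDa]
      exact H.add_mem (H.smul_mem _ (hg.2 v hv)) (H.smul_mem _ hv)
    refine ⟨fun v w => ?_, fun v hv => ?_⟩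
    · have h1 : ∀ x y, B (D (-t) x) (D (-t) y) = B (D t x) (D t y) := fun x y => by
        simp only [hDa, map_add, map_smul, LinearMap.add_apply, LinearMap.smul_apply, smul_eq_mul,
          hg.1]
        ring
      change B (D (-t) (Ring.inverse (D t) v)) (D (-t) (Ring.inverse (D t) w)) = _
      rw [h1, hr, hr]
    · change D (-t) (Ring.inverse (D t) v) ∈ H
      apply hDH
      have hmap := map_eq_of_injective (Function.LeftInverse.injective hl) (hDH t)
      rw [← hmap] at hv
      obtain ⟨x, hx, rfl⟩ := hv
      exact (hl x).symm ▸ hx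
  have h := joinedIn_of_countable_compl hT hF hS hD0 hD1
  have e0 : F 0 = 1 := by
    have : IsUnit (D 0) := by simpa [T] using hD0
    simp only [F, neg_zero]
    exact Ring.mul_inverse_cancel _ this
  have e1 : F 1 = g := by
    have hu : IsUnit (D 1) := by simpa [T] using hD1
    have : D (-1) = g * D 1 := by
      ext v
      simp [hDa]
    simp only [F]
    rw [this, mul_assoc, Ring.mul_inverse_cancel _ hu, mul_one]
  rwa [e0, e1] at h

/-! ### Splitting off the generalized `-1`-eigenspace -/

/-- The Fitting projection `aeval N p` onto the generalized `0`-eigenspace of `N`, a polynomial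
in `N`. -/
lemma exists_fitting_projection [FiniteDimensional ℂ V] (N : Module.End ℂ V) :
    ∃ (k : ℕ) (p a : ℂ[X]), k ≠ 0 ∧ N ^ k * aeval N p = 0 ∧
      1 - aeval N p = N ^ k * aeval N a := by
  have hm : X * minpoly ℂ N ≠ 0 :=
    mul_ne_zero X_ne_zero (minpoly.ne_zero (Algebra.IsIntegral.isIntegral N))
  obtain ⟨q, hq, hnd⟩ := exists_eq_pow_rootMultiplicity_mul_and_not_dvd _ hm 0
  set k := rootMultiplicity 0 (X * minpoly ℂ N)
  have hk : k ≠ 0 := by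
    have : 0 < k := (rootMultiplicity_pos hm).2 (by simp)
    omega
  simp only [C_0, sub_zero] at hq hnd
  have hcop : IsCoprime (X ^ k) q :=
    ((irreducible_X.coprime_iff_not_dvd).2 hnd).pow_left
  obtain ⟨a, b, hab⟩ := hcop
  refine ⟨k, b * q, a, hk, ?_, ?_⟩
  · have h1 : aeval N (X ^ k * (b * q)) = 0 := by
      rw [show X ^ k * (b * q) = b * (X ^ k * q) by ring, ← hq]
      simp
    simpa using h1
  · have h2 := congrArg (aeval N) (show 1 - b * q = X ^ k * a by rw [← hab]; ring)
    simpa using h2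

/-- Every element of the stabilizer is the product of an element without eigenvalue `-1` and an
involution, namely the one that is `-1` on the generalized `-1`-eigenspace. -/
lemma joinedIn_one [FiniteDimensional ℂ V] (hB : ∀ v, (∀ w, B v w = 0) → v = 0)
    (halt : ∀ v w, B v w = - B w v) {g : V →L[ℂ] V} (hg : g ∈ symplStab B H) :
    JoinedIn (symplStab B H) 1 g := by
  let N : Module.End ℂ V := (g : V →ₗ[ℂ] V) + 1
  have hN : ∀ v, N v = g v + v := fun v => rfl
  obtain ⟨k, p, a, hk, hp, ha⟩ := exists_fitting_projection N
  set π : Module.End ℂ V := aeval N p with hπ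
  have hkπ : ∀ v, (N ^ k) (π v) = 0 := fun v => LinearMap.congr_fun hp v
  have hcoπ : ∀ v, v - π v = (N ^ k) (aeval N a v) := fun v => LinearMap.congr_fun ha v
  have hcomm : ∀ q r : ℂ[X], ∀ v, aeval N q (aeval N r v) = aeval N r (aeval N q v) :=
    fun q r v => by
      have h := congrArg (aeval N) (mul_comm q r)
      rw [map_mul, map_mul] at h
      exact LinearMap.congr_fun h v
  have hNπ : ∀ v, π (N v) = N (π v) := fun v => by simpa using hcomm p X v
  have hgπ : ∀ v, π (g v) = g (π v) := fun v => by
    have := hNπ v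
    rw [hN, hN, map_add] at this
    exact add_right_cancel this
  have hak : ∀ v, aeval N a ((N ^ k) v) = (N ^ k) (aeval N a v) := fun v => by
    simpa using hcomm a (X ^ k) v
  have hzero : ∀ v, (N ^ k) v = 0 → π v = v := fun v hv => by
    have := hcoπ v
    rw [← hak, hv, map_zero] at this
    exact (sub_eq_zero.1 this).symm
  have hππ : ∀ v, π (π v) = π v := fun v => hzero _ (hkπ v)
  have hNH : ∀ v ∈ H, N v ∈ H := fun v hv => H.add_mem (hg.2 v hv) hv
  have hπH : ∀ v ∈ H, π v ∈ H := fun v hv =>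
    aeval_apply_smul_mem_of_le_comap hv p N hNH
  -- `N` has adjoint `N g⁻¹`, so the kernel and the range of `N ^ k` are orthogonal.
  have hadj : ∀ (j : ℕ) x y, B x ((N ^ j) y) = B ((N ^ j) x) ((g ^ j) y) := by
    intro j
    induction j with
    | zero => simp
    | succ j ih =>
      intro x y
      have h1 : ∀ x y, B x (N y) = B (N x) (g y) := fun x y => by
        simp only [hN, map_add, LinearMap.add_apply, hg.1]
        ring
      have h2 : (N ^ (j + 1)) y = (N ^ j) (N y) := by rw [pow_succ]; rfl
      have h3 : (N ^ (j + 1)) x = N ((N ^ j) x) := by rw [pow_succ']; rfl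
      have h4 : (g ^ (j + 1)) y = g ((g ^ j) y) := by rw [pow_succ']; rfl
      have h5 : (g ^ j) (N y) = N ((g ^ j) y) := by
        rw [hN, hN, map_add, ← h4, pow_succ]; rfl
      rw [h2, ih, h5, h1, h3, h4]
  have horth : ∀ v w, B (π v) (w - π w) = 0 := fun v w => by
    rw [hcoπ, hadj, hkπ]
    simp
  have hsym1 : ∀ v w, B (π v) w = B (π v) (π w) := fun v w => by
    have := horth v w
    rw [map_sub] at this
    linear_combination this
  have hsym2 : ∀ v w, B v (π w) = B (π v) (π w) := fun v w => by
    rw [halt, hsym1, ← halt]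
  let ε : V →L[ℂ] V := LinearMap.toContinuousLinearMap (1 - (2 : ℂ) • π)
  have hε : ∀ v, ε v = v - (2 : ℂ) • π v := fun v => rfl
  have hεmem : ε ∈ symplStab B H := by
    refine ⟨fun v w => ?_, fun v hv => ?_⟩
    · simp only [hε, map_sub, map_smul, LinearMap.sub_apply, LinearMap.smul_apply, smul_eq_mul,
        hsym1 v w, hsym2 v w]
      ring
    · rw [hε]
      exact H.sub_mem hv (H.smul_mem _ (hπH v hv))
  have hεε : ∀ v, ε (ε v) = v := fun v => by
    simp only [hε, map_sub, map_smul, hππ]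
    module
  have hker : ∀ v, (g * ε) v = -v → v = 0 := by
    intro v hv
    have hv' : g v - (2 : ℂ) • g (π v) = -v := by
      simpa [hε] using hv
    have h1 : π v = 0 := by
      have h2 : g (π v) = π v := by
        have := congrArg π hv'
        simp only [map_sub, map_smul, map_neg, hgπ, hππ] at this
        have h3 : -g (π v) = - π v := by rw [← this]; module
        exact neg_injective h3
      have h4 : ∀ j : ℕ, (N ^ j) (π v) = (2 : ℂ) ^ j • π v := by
        intro j
        induction j with
        | zero => simp
        | succ j ih =>
          rw [pow_succ']
          change N ((N ^ j) (π v)) = _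
          rw [ih, map_smul, hN, h2]
          module
      have h5 := h4 k
      rw [hkπ] at h5
      simpa using h5.symm
    rw [h1] at hv'
    have h6 : N v = 0 := by
      rw [hN]
      simpa using congrArg (· + v) hv'
    rw [← hzero v, h1]
    obtain ⟨j, rfl⟩ := Nat.exists_eq_succ_of_ne_zero hk
    rw [pow_succ]
    change (N ^ j) (N v) = 0
    rw [h6, map_zero]
  have hsplit : g = (g * ε) * ε := by
    ext v
    simp [hεε]
  rw [hsplit]
  exact joinedIn_one_mul (joinedIn_of_ker_eq_zero (mul_mem_symplStab hg hεmem) hker)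
    (joinedIn_involution hB halt _ ε hεmem hεε rfl)

end Stab

/-- Proposition 3.7(3) (`prop:orbit-symp`): for a nondegenerate skew-symmetric form, the
stabilizer in the symplectic group of any subspace `H ⊆ V` is a connected subset of the
endomorphism space.  (The canonical topology of the finite-dimensional space `End V` is
realized here via an arbitrary norm on `V`; by finite-dimensionality all choices give the
same topology.) -/
theorem stmt_4 {V : Type*} [NormedAddCommGroup V] [NormedSpace ℂ V] [FiniteDimensional ℂ V]
    (B : V →ₗ[ℂ] V →ₗ[ℂ] ℂ)
    (hB : ∀ v, (∀ w, B v w = 0) → v = 0)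
    (halt : ∀ v w, B v w = - B w v)
    (H : Submodule ℂ V) :
    IsConnected {g : V →L[ℂ] V |
      Function.Bijective g ∧ (∀ v w, B (g v) (g w) = B v w) ∧
      Submodule.map (g : V →ₗ[ℂ] V) H = H} := by
  have hset : {g : V →L[ℂ] V | Function.Bijective g ∧ (∀ v w, B (g v) (g w) = B v w) ∧
      Submodule.map (g : V →ₗ[ℂ] V) H = H} = symplStab B H := by
    ext g
    constructor
    · rintro ⟨-, h1, h2⟩
      exact ⟨h1, fun v hv => h2 ▸ Submodule.mem_map_of_mem (f := (g : V →ₗ[ℂ] V)) hv⟩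
    · rintro ⟨h1, h2⟩
      have hinj := injective_of_isometry hB h1
      refine ⟨⟨hinj, LinearMap.injective_iff_surjective.1
        (show Function.Injective (g : V →ₗ[ℂ] V) from hinj)⟩, h1, ?_⟩
      exact map_eq_of_injective hinj h2
  rw [hset]
  exact IsPathConnected.isConnected ⟨1, one_mem_symplStab, fun {_} hg => joinedIn_one hB halt hg⟩
end

section
/- Assume the form ⟨−,−⟩ is symmetric (and nondegenerate). Let 0 ≤ k ≤ n and let r be an integer. Then there exists a subspace H ⊆ V with dim H = k and dim H − dim(H ∩ H^⊥) = r if and only if max{0, 2k − n} ≤ r ≤ k. -/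
/-!
Nondegeneracy gives `dim H^⊥ = n - k`, and `H ∩ H^⊥` lies in both `H` and `H^⊥`; this yields the
bounds on `r`.

Conversely, put `s = k - r`, so that `r + 2 s ≤ n`. An orthogonal basis `v` of `V` consists of
anisotropic vectors. Over `ℂ` there is, for any two of them `v i`, `v j`, a scalar `c` such that
`v i + c v j` is isotropic. Take `H` spanned by `r` of the basis vectors together with `s` isotropic
combinations built from `s` disjoint pairs of the remaining ones: its Gram matrix is diagonal with
exactly `r` nonzero entries, so the isotropic combinations span `H ∩ H^⊥`.
-/

open Module

theorem bperp_eq_orthogonal {V : Type*} [AddCommGroup V] [Module ℂ V]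
    (B : V →ₗ[ℂ] V →ₗ[ℂ] ℂ) (hsymm : ∀ v w, B v w = B w v) (H : Submodule ℂ V) :
    bperp B H = LinearMap.BilinForm.orthogonal B H := by
  ext x
  rw [LinearMap.BilinForm.mem_orthogonal_iff]
  exact forall₂_congr fun w _ => by
    rw [hsymm]

/-- A family is linearly independent if its matrix of pairings against some family `w` is diagonal
with nonzero diagonal entries. -/
theorem linearIndependent_of_pairing {V ι : Type*} [AddCommGroup V] [Module ℂ V] [Fintype ι]
    (B : V →ₗ[ℂ] V →ₗ[ℂ] ℂ) (u w : ι → V)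
    (hd : ∀ a, B (u a) (w a) ≠ 0) (ho : ∀ a b, a ≠ b → B (u a) (w b) = 0) :
    LinearIndependent ℂ u := by
  rw [Fintype.linearIndependent_iff]
  intro g hg b
  have h : B (∑ a, g a • u a) (w b) = 0 := by rw [hg]; simp
  rw [map_sum, LinearMap.sum_apply, Finset.sum_eq_single b] at h
  · simpa [hd b] using h
  · intro a _ hab
    simp [ho a b hab]
  · simp

/-- If a linearly independent family is orthogonal, with `Fin r` indexing anisotropic vectors and
`Fin s` isotropic ones, then the radical of its span is spanned by the isotropic part. -/
theorem finrank_radical_span {V : Type*} [AddCommGroup V] [Module ℂ V]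
    (B : V →ₗ[ℂ] V →ₗ[ℂ] ℂ) {r s : ℕ} (u : Fin r ⊕ Fin s → V)
    (hu : LinearIndependent ℂ u)
    (ho : ∀ a b, a ≠ b → B (u a) (u b) = 0)
    (hl : ∀ i, B (u (.inl i)) (u (.inl i)) ≠ 0)
    (hr : ∀ j, B (u (.inr j)) (u (.inr j)) = 0) :
    finrank ℂ ↥(Submodule.span ℂ (Set.range u) ⊓
      bperp B (Submodule.span ℂ (Set.range u))) = s := by
  have key : Submodule.span ℂ (Set.range u) ⊓ bperp B (Submodule.span ℂ (Set.range u))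
      = Submodule.span ℂ (Set.range (u ∘ Sum.inr)) := by
    apply le_antisymm
    · rintro x ⟨hx, hp⟩
      obtain ⟨c, rfl⟩ := (Submodule.mem_span_range_iff_exists_fun ℂ).1 hx
      have hc : ∀ i, c (.inl i) = 0 := by
        intro i
        have h := hp (u (.inl i)) (Submodule.subset_span ⟨_, rfl⟩)
        rw [map_sum, LinearMap.sum_apply, Finset.sum_eq_single (Sum.inl i)] at h
        · simpa [hl i] using h
        · intro a _ hab
          simp [ho a _ hab]
        · simp
      rw [Fintype.sum_sum_type]
      simp only [hc, zero_smul, Finset.sum_const_zero, zero_add]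
      exact Submodule.sum_mem _ fun j _ =>
        Submodule.smul_mem _ _ (Submodule.subset_span ⟨j, rfl⟩)
    · rw [Submodule.span_le]
      rintro _ ⟨j, rfl⟩
      refine ⟨Submodule.subset_span ⟨_, rfl⟩, fun w hw => ?_⟩
      obtain ⟨c, rfl⟩ := (Submodule.mem_span_range_iff_exists_fun ℂ).1 hw
      rw [map_sum]
      refine Finset.sum_eq_zero fun a _ => ?_
      by_cases h : Sum.inr j = a
      · subst h
        simp [hr j]
      · simp [ho _ _ h]
  rw [key, finrank_span_eq_card (hu.comp _ Sum.inr_injective), Fintype.card_fin]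

/-- The construction of `H`; here `s` is the dimension of the radical `H ∩ H^⊥`, and each of its
basis vectors uses up two vectors of an orthogonal basis of `V`. -/
theorem exists_subspace {V : Type*} [AddCommGroup V] [Module ℂ V] [FiniteDimensional ℂ V]
    (B : V →ₗ[ℂ] V →ₗ[ℂ] ℂ) (hB : B.Nondegenerate) (hsymm : ∀ v w, B v w = B w v)
    (r s : ℕ) (hrs : r + 2 * s ≤ finrank ℂ V) :
    ∃ H : Submodule ℂ V, finrank ℂ H = r + s ∧ finrank ℂ ↥(H ⊓ bperp B H) = s := by
  obtain ⟨v, hv⟩ := LinearMap.BilinForm.exists_orthogonal_basis (B := B) ⟨hsymm⟩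
  have hne : ∀ i, B (v i) (v i) ≠ 0 := hv.not_isOrtho_basis_self_of_separatingLeft hB.1
  have hor : ∀ i j, i ≠ j → B (v i) (v j) = 0 := fun i j h => hv h
  have hsq : ∀ i j, ∃ c : ℂ, B (v i) (v i) + c * c * B (v j) (v j) = 0 := by
    intro i j
    obtain ⟨c, hc⟩ := IsAlgClosed.exists_eq_mul_self (-B (v i) (v i) / B (v j) (v j))
    refine ⟨c, ?_⟩
    rw [← hc]
    field_simp [hne j]
    ring
  choose c hc using hsq
  -- `p`, `q` and `t` are injective with disjoint ranges: `p` indexes the anisotropic vectors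
  -- of `H`, and `q j`, `t j` form the pair combined into the `j`-th isotropic vector.
  let p : Fin r → Fin (finrank ℂ V) := fun i => ⟨i, by omega⟩
  let q : Fin s → Fin (finrank ℂ V) := fun j => ⟨r + 2 * j, by omega⟩
  let t : Fin s → Fin (finrank ℂ V) := fun j => ⟨r + 2 * j + 1, by omega⟩
  have hpp : ∀ i j, i ≠ j → p i ≠ p j := by intro i j; simp [p, Fin.ext_iff]
  have hqq : ∀ i j, i ≠ j → q i ≠ q j := by intro i j; simp [q, Fin.ext_iff]
  have hqq2 : ∀ i j, i ≠ j → t i ≠ t j := by intro i j; simp [t, Fin.ext_iff]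
  have hpq : ∀ i j, p i ≠ q j := by intro i j; simp only [p, q, ne_eq, Fin.ext_iff]; omega
  have hpq2 : ∀ i j, p i ≠ t j := by intro i j; simp only [p, t, ne_eq, Fin.ext_iff]; omega
  have hq2 : ∀ i j, q i ≠ t j := by intro i j; simp only [q, t, ne_eq, Fin.ext_iff]; omega
  let u : Fin r ⊕ Fin s → V :=
    Sum.elim (fun i => v (p i)) (fun j => v (q j) + c (q j) (t j) • v (t j))
  have ho : ∀ a b, a ≠ b → B (u a) (u b) = 0 := by
    rintro (i | i) (j | j) hab
    · have : i ≠ j := fun h => hab (by rw [h])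
      simp [u, hor _ _ (hpp i j this)]
    · simp [u, hor _ _ (hpq i j), hor _ _ (hpq2 i j)]
    · simp [u, hor _ _ (hpq j i).symm, hor _ _ (hpq2 j i).symm]
    · have : i ≠ j := fun h => hab (by rw [h])
      simp [u, hor _ _ (hqq i j this), hor _ _ (hqq2 i j this), hor _ _ (hq2 i j),
        hor _ _ (hq2 j i).symm]
  have hind : LinearIndependent ℂ u := by
    apply linearIndependent_of_pairing B u (Sum.elim (fun i => v (p i)) (fun j => v (q j)))
    · rintro (i | i)
      · simpa [u] using hne _
      · simpa [u, hor _ _ (hq2 i i).symm] using hne _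
    · rintro (i | i) (j | j) hab
      · have : i ≠ j := fun h => hab (by rw [h])
        simp [u, hor _ _ (hpp i j this)]
      · simp [u, hor _ _ (hpq i j)]
      · simp [u, hor _ _ (hpq j i).symm, hor _ _ (hpq2 j i).symm]
      · have : i ≠ j := fun h => hab (by rw [h])
        simp [u, hor _ _ (hqq i j this), hor _ _ (hq2 j i).symm]
  refine ⟨Submodule.span ℂ (Set.range u), ?_, finrank_radical_span B u hind ho ?_ ?_⟩
  · rw [finrank_span_eq_card hind]
    simp
  · intro i
    simpa [u] using hne _
  · intro j
    have h := hc (q j) (t j)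
    simp only [u, Sum.elim_inr, map_add, LinearMap.add_apply, map_smul, LinearMap.smul_apply,
      smul_eq_mul, hor _ _ (hq2 j j), hor _ _ (hq2 j j).symm]
    linear_combination h


/-- Proposition 3.9(1) (`prop:orbit-orth`): for a nondegenerate symmetric form on an
`n`-dimensional space and `0 ≤ k ≤ n`, a subspace `H` with `dim H = k` and
`dim H - dim (H ∩ H^⊥) = r` exists if and only if `max {0, 2k - n} ≤ r ≤ k`. -/
theorem stmt_5 {V : Type*} [AddCommGroup V] [Module ℂ V] [FiniteDimensional ℂ V]
    (n : ℕ) (hn : finrank ℂ V = n)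
    (B : V →ₗ[ℂ] V →ₗ[ℂ] ℂ)
    (hB : ∀ v, (∀ w, B v w = 0) → v = 0)
    (hsymm : ∀ v w, B v w = B w v)
    (k : ℕ) (hkn : k ≤ n) (r : ℤ) :
    (∃ H : Submodule ℂ V, finrank ℂ H = k ∧
        (finrank ℂ H : ℤ) - (finrank ℂ ↥(H ⊓ bperp B H) : ℤ) = r) ↔
      (max 0 (2 * (k : ℤ) - n) ≤ r ∧ r ≤ k) := by
  have hnd : B.Nondegenerate :=
    ⟨hB, fun w hw => hB w fun v => by rw [hsymm]; exact hw v⟩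
  constructor
  · rintro ⟨H, hk, hr⟩
    have h1 : finrank ℂ ↥(H ⊓ bperp B H) ≤ finrank ℂ H := Submodule.finrank_mono inf_le_left
    have h2 : finrank ℂ ↥(H ⊓ bperp B H) ≤ finrank ℂ (bperp B H) :=
      Submodule.finrank_mono inf_le_right
    have h3 : finrank ℂ (bperp B H) = finrank ℂ V - finrank ℂ H := by
      rw [bperp_eq_orthogonal B hsymm]
      exact LinearMap.BilinForm.finrank_orthogonal hnd H
    omega
  · rintro ⟨h1, h2⟩
    lift r to ℕ using le_trans (le_max_left _ _) h1
    obtain ⟨H, hH, hR⟩ := exists_subspace B hnd hsymm r (k - r) (by omega)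
    exact ⟨H, by omega, by omega⟩
end
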